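/- arXiv:2501.15515 — 8 statements merged into one kernel-verified Lean document; each statement's English description precedes it below -/
import Mathlib

section
/- Let n ≥ 4 be an even integer and let d̃ be the sequence consisting of two entries equal to n followed by n−2 entries equal to n/2. Then the minimum of MaxMult(H) over all multigraph realizations H of d̃ whose underlying simple graph is bipartite equals 2; moreover, every such bipartite multigraph realization H with MaxMult(H) = 2 satisfies TotMult(H) ≥ n−2. -/
/-!
Write `n = 2k`; the sequence has two *big* entries `2k` and `2k - 2` *small* entries `k`.

A vertex of degree `n` has at most `n - 1` neighbours, so some multiplicity is at least `2`
(`two_le_maxMult`). The value `2` is attained by `Multigraph.doubleStar`: one big vertex and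
`k - 1` small ones on each side, each big vertex doubly joined to the whole opposite side, and the
small vertices forming a complete bipartite graph minus a perfect matching.

For the bound on the total multiplicity, let `a`, `b` be the big vertices. Comparing the degree
sums of the two sides (`sum_deg_side`), either `a` and `b` are on different sides and both sides
have `k` vertices, or they share a side and the other one has `k + 1` vertices. A vertex has excess
at least its degree minus the size of the opposite side (`deg_le_excess_add`). So in the first case
`a` and `b` have excess at least `k` each, at most one unit of which is common (the pair `a`, `b`
itself), and in the second case they have excess at least `k - 1` each with nothing in common.
Both cases give at least `2k - 2`, by `excess_add_excess_le`.
-/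

/-- A loopless multigraph on vertex set `Fin N`, given by symmetric edge
multiplicities with zero diagonal; `m v u` is the number of parallel edges
between `v` and `u`. -/
structure Multigraph (N : ℕ) where
  m : Fin N → Fin N → ℕ
  symm : ∀ v u, m v u = m u v
  loopless : ∀ v, m v v = 0

namespace Multigraph

variable {N : ℕ}

/-- The degree of a vertex. -/
def deg (H : Multigraph N) (v : Fin N) : ℕ := ∑ u, H.m v u

/-- `H` realizes the sequence `d 1, d 2, …, d n` (1-indexed): the multiset of
vertex degrees equals the multiset of entries of the sequence. -/
def Realizes (H : Multigraph N) (n : ℕ) (d : ℕ → ℕ) : Prop :=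
  Multiset.map H.deg Finset.univ.val = Multiset.map d (Finset.Icc 1 n).val

/-- Total multiplicity: the number of excess edge copies, summed over unordered
pairs of vertices (pairs with multiplicity `0` contribute `0`). -/
def totMult (H : Multigraph N) : ℕ :=
  ∑ v : Fin N, ∑ u ∈ Finset.univ.filter (fun u => v < u), (H.m v u - 1)

/-- Maximum multiplicity: the largest number of parallel edges between any two
vertices. -/
def maxMult (H : Multigraph N) : ℕ :=
  Finset.univ.sup fun p : Fin N × Fin N => H.m p.1 p.2

/-- All multiplicities are at most `1`, i.e. `H` is a simple graph. -/
def Simple (H : Multigraph N) : Prop := ∀ v u, H.m v u ≤ 1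

/-- The underlying simple graph of `H` is bipartite: the vertices can be split
into two classes such that every edge crosses between the classes. -/
def Bipartite (H : Multigraph N) : Prop :=
  ∃ S : Set (Fin N), ∀ v u, 1 ≤ H.m v u → (v ∈ S ↔ u ∉ S)

end Multigraph

namespace Multigraph

open Finset

variable {N : ℕ}

/-! ### Excess and degree sums -/

/-- The excess at a vertex: the number of surplus edge copies over all pairs containing it. -/
def excess (H : Multigraph N) (v : Fin N) : ℕ := ∑ u, (H.m v u - 1)

/-- Each unordered pair contributes to the excess of both its vertices. -/
theorem sum_excess (H : Multigraph N) : ∑ v, H.excess v = 2 * H.totMult := by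
  have h1 : ∀ v u : Fin N, H.m v u - 1 =
      (if v < u then H.m v u - 1 else 0) + (if u < v then H.m u v - 1 else 0) := by
    intro v u
    rcases lt_trichotomy v u with h | h | h
    · simp [h, h.le.not_gt]
    · subst h; simp [H.loopless]
    · simp [h, h.le.not_gt, H.symm v u]
  have h2 : ∑ v, H.excess v = ∑ v : Fin N, ∑ u : Fin N,
      ((if v < u then H.m v u - 1 else 0) + (if u < v then H.m u v - 1 else 0)) :=
    sum_congr rfl fun v _ => sum_congr rfl fun u _ => h1 v u
  have h3 : ∑ v : Fin N, ∑ u : Fin N, (if u < v then H.m u v - 1 else 0) = H.totMult := by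
    rw [sum_comm]
    simp only [totMult, sum_filter]
  rw [h2]
  simp only [sum_add_distrib]
  rw [h3]
  simp only [totMult, sum_filter]
  ring

/-- Only the surplus copies between `a` and `b` are counted twice in the excesses of `a` and `b`. -/
theorem excess_add_excess_le (H : Multigraph N) {a b : Fin N} (hab : a ≠ b) :
    H.excess a + H.excess b ≤ H.totMult + (H.m a b - 1) := by
  have hsplit : ∀ f : Fin N → ℕ, ∑ v, f v = f a + f b + ∑ v ∈ (univ.erase a).erase b, f v := by
    intro f
    rw [← add_sum_erase univ f (mem_univ a),
      ← add_sum_erase (univ.erase a) f (mem_erase.2 ⟨hab.symm, mem_univ b⟩), add_assoc]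
  have h1 := hsplit H.excess
  have h2 : ∑ v ∈ (univ.erase a).erase b, ((H.m a v - 1) + (H.m b v - 1)) ≤
      ∑ v ∈ (univ.erase a).erase b, H.excess v := by
    refine sum_le_sum fun v _ => ?_
    have h := hsplit fun u => H.m v u - 1
    rw [H.symm a v, H.symm b v]
    unfold excess
    omega
  rw [sum_add_distrib] at h2
  have ha := hsplit fun u => H.m a u - 1
  have hb := hsplit fun u => H.m b u - 1
  simp only [H.loopless, H.symm b a] at ha hb
  have h3 := H.sum_excess
  have ea : H.excess a = ∑ u, (H.m a u - 1) := rfl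
  have eb : H.excess b = ∑ u, (H.m b u - 1) := rfl
  omega

/-- In a bipartite multigraph both sides have the same degree sum. -/
theorem sum_deg_side (H : Multigraph N) (S : Finset (Fin N))
    (hS : ∀ v u, 1 ≤ H.m v u → (v ∈ S ↔ u ∉ S)) :
    ∑ v ∈ S, H.deg v = ∑ v ∈ Sᶜ, H.deg v := by
  have key : ∀ v u, (if v ∈ S then H.m v u else 0) = if u ∈ Sᶜ then H.m u v else 0 := by
    intro v u
    rw [H.symm u v]
    rcases Nat.eq_zero_or_pos (H.m v u) with h | h
    · simp [h]
    · simp only [hS v u h, mem_compl]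
  have expand : ∀ T : Finset (Fin N),
      ∑ v ∈ T, H.deg v = ∑ v, ∑ u, if v ∈ T then H.m v u else 0 := by
    intro T
    have h : ∑ v ∈ T, H.deg v = ∑ v, if v ∈ T then H.deg v else 0 := by simp
    rw [h]
    refine sum_congr rfl fun v _ => ?_
    by_cases h : v ∈ T <;> simp [h, deg]
  rw [expand S, expand Sᶜ, sum_comm]
  exact sum_congr rfl fun v _ => sum_congr rfl fun u _ => key u v

/-- If all neighbours of `v` lie in `T`, the first copies of the edges at `v` number at most
`T.card`, and the excess counts the others. -/
theorem deg_le_excess_add (H : Multigraph N) (v : Fin N) (T : Finset (Fin N))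
    (hT : ∀ u, 1 ≤ H.m v u → u ∈ T) : H.deg v ≤ H.excess v + T.card := by
  have h : T.card = ∑ u : Fin N, if u ∈ T then 1 else 0 := by simp
  rw [h, excess, ← sum_add_distrib, deg]
  refine sum_le_sum fun u _ => ?_
  by_cases hu : u ∈ T
  · simp only [hu, if_true]; omega
  · have := mt (hT u) hu
    omega

/-! ### Realizations of the sequence -/

theorem m_le_maxMult (H : Multigraph N) (v u : Fin N) : H.m v u ≤ H.maxMult :=
  le_sup (f := fun p : Fin N × Fin N => H.m p.1 p.2) (mem_univ (v, u))

theorem Realizes.card_eq {H : Multigraph N} {n : ℕ} {d : ℕ → ℕ} (h : H.Realizes n d) : N = n := by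
  simpa using congrArg Multiset.card h

theorem Realizes.card_filter {H : Multigraph N} {n : ℕ} {d : ℕ → ℕ} (h : H.Realizes n d) (x : ℕ) :
    (univ.filter fun v => H.deg v = x).card = ((Icc 1 n).filter fun i => d i = x).card := by
  have := congrArg (Multiset.count x) h
  rw [Multiset.count_map, Multiset.count_map] at this
  simpa only [Finset.card, Finset.filter_val, eq_comm] using this

/-- A realization has exactly two vertices of degree `n`, and the others have degree `n / 2`. -/
theorem Realizes.exists_big {n : ℕ} {H : Multigraph N} (hn : 4 ≤ n)
    (h : H.Realizes n (fun i => if i ≤ 2 then n else n / 2)) :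
    ∃ a b, a ≠ b ∧ ∀ v, H.deg v = if v = a ∨ v = b then n else n / 2 := by
  have hc := h.card_filter n
  have h2 : ((Icc 1 n).filter fun i => (if i ≤ 2 then n else n / 2) = n) = Icc 1 2 := by
    ext i
    simp only [mem_filter, mem_Icc]
    split_ifs <;> omega
  rw [h2, Nat.card_Icc, card_eq_two] at hc
  obtain ⟨a, b, hab, hf⟩ := hc
  refine ⟨a, b, hab, fun v => ?_⟩
  have hv := congrArg (v ∈ ·) hf
  simp only [mem_filter, mem_univ, true_and, mem_insert, mem_singleton, eq_iff_iff] at hv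
  split_ifs with hv'
  · exact hv.2 hv'
  · have hm : H.deg v ∈ Multiset.map H.deg univ.val := Multiset.mem_map_of_mem _ (mem_univ v)
    rw [h, Multiset.mem_map] at hm
    obtain ⟨i, -, hi⟩ := hm
    have := mt hv.1 hv'
    split_ifs at hi <;> omega

/-- With all multiplicities at most `1`, a big vertex would need `n` neighbours among the `n - 1`
other vertices. -/
theorem two_le_maxMult {n : ℕ} {H : Multigraph N} (hn : 4 ≤ n)
    (h : H.Realizes n (fun i => if i ≤ 2 then n else n / 2)) : 2 ≤ H.maxMult := by
  obtain ⟨a, b, -, hd⟩ := h.exists_big hn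
  obtain rfl := h.card_eq
  by_contra hlt
  have h1 := H.deg_le_excess_add a (univ.erase a) fun u hu => by
    refine mem_erase.2 ⟨?_, mem_univ u⟩
    rintro rfl
    simp [H.loopless] at hu
  have h2 : H.excess a = 0 := sum_eq_zero fun u _ => by
    have := H.m_le_maxMult a u
    omega
  rw [card_erase_of_mem (mem_univ a), card_univ, Fintype.card_fin, hd a] at h1
  simp only [true_or, if_true] at h1
  omega

/-- The two big vertices alone account for a total multiplicity of `2 * k - 2`. -/
theorem le_totMult {k : ℕ} {H : Multigraph N} (hk : 2 ≤ k)
    (h : H.Realizes (2 * k) (fun i => if i ≤ 2 then 2 * k else 2 * k / 2))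
    (hB : H.Bipartite) (hM : H.maxMult = 2) : 2 * k - 2 ≤ H.totMult := by
  classical
  obtain ⟨a, b, hab, hd⟩ := h.exists_big (by omega)
  obtain rfl := h.card_eq
  obtain ⟨S', hcross⟩ := hB
  obtain ⟨S, rfl⟩ : ∃ S : Finset (Fin (2 * k)), (S : Set (Fin (2 * k))) = S' :=
    ⟨S'.toFinset, by simp⟩
  simp only [mem_coe] at hcross
  -- In units of `k`, the degree sum of a set counts its vertices, the big ones twice.
  have weight : ∀ T : Finset (Fin (2 * k)), ∑ v ∈ T, H.deg v =
      k * (T.card + (if a ∈ T then 1 else 0) + (if b ∈ T then 1 else 0)) := by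
    intro T
    have hv : ∀ v, H.deg v = k * (1 + (if v = a then 1 else 0) + (if v = b then 1 else 0)) := by
      intro v
      rw [hd v]
      by_cases h1 : v = a
      · have h2 : v ≠ b := by rintro rfl; exact hab h1.symm
        simp [h1, hab, mul_comm]
      · by_cases h2 : v = b
        · simp [h2, Ne.symm hab, mul_comm]
        · simp [h1, h2]
    simp only [hv, ← mul_sum, sum_add_distrib, sum_ite_eq', sum_const, smul_eq_mul, mul_one]
  have hbal := H.sum_deg_side S hcross
  rw [weight, weight] at hbal
  have hbal := Nat.eq_of_mul_eq_mul_left (by omega) hbal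
  have hcard : S.card + Sᶜ.card = 2 * k := by simp
  have hle := H.excess_add_excess_le hab
  have hda := hd a
  have hdb := hd b
  simp only [true_or, or_true, if_true] at hda hdb
  have hin : ∀ v ∈ S, H.deg v ≤ H.excess v + Sᶜ.card := fun v hv =>
    H.deg_le_excess_add v _ fun u hu => mem_compl.2 ((hcross v u hu).1 hv)
  have hout : ∀ v, v ∉ S → H.deg v ≤ H.excess v + S.card := fun v hv =>
    H.deg_le_excess_add v _ fun u hu => not_not.1 (mt (hcross v u hu).2 hv)
  have hm := H.m_le_maxMult a b
  have hsame : (a ∈ S ↔ b ∈ S) → H.m a b = 0 := by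
    intro hiff
    by_contra h0
    have := hcross a b (by omega)
    tauto
  by_cases ha : a ∈ S <;> by_cases hb : b ∈ S <;>
    simp only [ha, hb, mem_compl, if_true, if_false, not_true, not_false_eq_true, iff_true,
      iff_false, true_implies] at hbal hsame
  · have := hin a ha; have := hin b hb; omega
  · have := hin a ha; have := hout b hb; omega
  · have := hout a ha; have := hin b hb; omega
  · have := hout a ha; have := hout b hb; omega

/-! ### The extremal multigraph -/

/-- Multiplicity between the `i`-th vertex of one side and the `j`-th vertex of the other side in
`doubleStar`; index `0` is the big vertex of its side. -/
def starWeight (i j : ℕ) : ℕ := if i = 0 ∨ j = 0 then 2 else if i = j then 0 else 1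

theorem starWeight_comm (i j : ℕ) : starWeight i j = starWeight j i := by
  simp only [starWeight, or_comm, eq_comm]

theorem sum_starWeight (k i : ℕ) (hi : i < k) :
    ∑ j ∈ range k, starWeight i j = if i = 0 then 2 * k else k := by
  split_ifs with h0
  · simp [starWeight, h0, mul_comm]
  · obtain ⟨l, rfl⟩ : ∃ l, k = l + 1 := ⟨k - 1, by omega⟩
    have h1 : ∀ j, starWeight i (j + 1) + (if i - 1 = j then 1 else 0) = 1 := by
      intro j
      simp only [starWeight]
      by_cases hj : i = j + 1
      · simp [hj]
      · have h4 : i - 1 ≠ j := by omega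
        simp [h0, hj, h4]
    have h2 := sum_congr (rfl : range l = range l) fun j _ => h1 j
    rw [sum_add_distrib, sum_ite_eq, if_pos (mem_range.2 (by omega))] at h2
    simp only [sum_const, card_range, smul_eq_mul, mul_one] at h2
    rw [sum_range_succ']
    have h3 : starWeight i 0 = 2 := by simp [starWeight]
    omega

/-- The extremal multigraph: the sides are the even and the odd numbers below `2 * k`, and the
vertex `v` is the `v / 2`-th of its side, so that the big vertices are `0` and `1`. -/
def doubleStar (k : ℕ) : Multigraph (2 * k) where
  m v u := if v.val % 2 = u.val % 2 then 0 else starWeight (v.val / 2) (u.val / 2)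
  symm v u := by simp only [starWeight_comm, eq_comm]
  loopless v := by simp

theorem sum_range_two_mul (f : ℕ → ℕ) (k : ℕ) :
    ∑ i ∈ range (2 * k), f i = ∑ j ∈ range k, (f (2 * j) + f (2 * j + 1)) := by
  induction k with
  | zero => simp
  | succ k ih => rw [mul_add, mul_one, sum_range_succ, sum_range_succ, sum_range_succ, ih, add_assoc]

theorem doubleStar_deg (k : ℕ) (v : Fin (2 * k)) :
    (doubleStar k).deg v = if v.val + 1 ≤ 2 then 2 * k else 2 * k / 2 := by
  have h : (doubleStar k).deg v = ∑ j ∈ range k, starWeight (v.val / 2) j := by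
    simp only [deg, doubleStar]
    rw [Fin.sum_univ_eq_sum_range
      (fun u => if v.val % 2 = u % 2 then 0 else starWeight (v.val / 2) (u / 2)),
      sum_range_two_mul]
    refine sum_congr rfl fun j _ => ?_
    have h1 : 2 * j % 2 = 0 := by omega
    have h2 : (2 * j + 1) % 2 = 1 := by omega
    have h3 : 2 * j / 2 = j := by omega
    have h4 : (2 * j + 1) / 2 = j := by omega
    rcases Nat.mod_two_eq_zero_or_one v.val with h | h <;> simp [h, h1, h2, h3, h4]
  have hv := v.isLt
  rw [h, sum_starWeight k _ (by omega)]
  split_ifs <;> omega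

theorem doubleStar_realizes (k : ℕ) :
    (doubleStar k).Realizes (2 * k) (fun i => if i ≤ 2 then 2 * k else 2 * k / 2) := by
  have h : (Icc 1 (2 * k)) =
      (univ : Finset (Fin (2 * k))).map (Fin.valEmbedding.trans (addRightEmbedding 1)) := by
    ext i
    simp only [mem_Icc, mem_map, mem_univ, true_and, Function.Embedding.trans_apply,
      Fin.valEmbedding_apply, addRightEmbedding_apply]
    constructor
    · intro hi
      exact ⟨⟨i - 1, by omega⟩, by simp only; omega⟩
    · rintro ⟨v, rfl⟩
      omega
  rw [Realizes, h, map_val, Multiset.map_map]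
  exact Multiset.map_congr rfl fun v _ => doubleStar_deg k v

theorem doubleStar_bipartite (k : ℕ) : (doubleStar k).Bipartite := by
  refine ⟨{v | v.val % 2 = 0}, fun v u h => ?_⟩
  simp only [doubleStar] at h
  simp only [Set.mem_ofPred_eq]
  split_ifs at h <;> omega

theorem doubleStar_maxMult (k : ℕ) (hk : 2 ≤ k) : (doubleStar k).maxMult = 2 := by
  refine le_antisymm (Finset.sup_le fun p _ => ?_)
    (two_le_maxMult (by omega) (doubleStar_realizes k))
  simp only [doubleStar, starWeight]
  split_ifs <;> omega

end Multigraph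

/-- Let `n ≥ 4` be even and let `d̃` be the sequence with two
entries `n` followed by `n−2` entries `n/2`. The minimum of `MaxMult` over all
multigraph realizations of `d̃` whose underlying simple graph is bipartite
equals `2`, and every such bipartite realization with maximum multiplicity `2`
has total multiplicity at least `n−2`. -/
theorem stmt8 (n : ℕ) (hn : 4 ≤ n) (hne : Even n) :
    IsLeast {k : ℕ | ∃ (N : ℕ) (H : Multigraph N),
        H.Realizes n (fun i => if i ≤ 2 then n else n / 2) ∧ H.Bipartite ∧
          H.maxMult = k} 2 ∧
      ∀ (N : ℕ) (H : Multigraph N),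
        H.Realizes n (fun i => if i ≤ 2 then n else n / 2) → H.Bipartite →
          H.maxMult = 2 → n - 2 ≤ H.totMult := by
  obtain ⟨k, rfl⟩ := hne.exists_two_nsmul
  simp only [smul_eq_mul] at hn ⊢
  refine ⟨⟨⟨2 * k, Multigraph.doubleStar k, Multigraph.doubleStar_realizes k,
    Multigraph.doubleStar_bipartite k, Multigraph.doubleStar_maxMult k (by omega)⟩, ?_⟩, ?_⟩
  · rintro _ ⟨N, H, hR, -, rfl⟩
    exact Multigraph.two_le_maxMult hn hR
  · intro N H hR hB hM
    exact Multigraph.le_totMult (by omega) hR hB hM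
end

section
/- Let n be even and let b = (b_1,…,b_n) be a sequence of positive integers such that for some integer B > 0: b_i ≥ 2B for every i ∈ {1,…,n−2}, b_{n−1} = b_n = B, and ∑_{i=1}^n b_i = (2n−1)B. Suppose S ⊆ {1,…,n} satisfies ∑_{i∈S} b_i = ∑_{i∉S} b_i. Then |S| = n/2 and exactly one of the two indices n−1, n belongs to S. -/
/-!
Give the indices `n - 1` and `n` weight `1` and all other indices weight `2`, so that
`b i ≥ (weight of i) * B`. The whole index set has weight `2 * n - 2`, while `S` and its complement
both have sum `(2 * n - 1) * B / 2 < n * B`, hence weight at most `n - 1`; so both have weight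
exactly `n - 1`, which is odd. Since the weight of `S` is `2 * |S|` minus the number of indices
among `n - 1`, `n` that lie in `S`, that number is odd, hence `1`, and `|S| = n / 2`.
-/

/-- Let `n ≥ 2` be even and `b 1, …, b n` positive integers
such that for some `B > 0`: `b i ≥ 2B` for `i ∈ {1, …, n−2}`,
`b (n−1) = b n = B`, and `∑_{i=1}^n b i = (2n−1)B`. If `S ⊆ {1, …, n}`
satisfies `∑_{i ∈ S} b i = ∑_{i ∉ S} b i`, then `|S| = n/2` and exactly one of
the indices `n−1`, `n` belongs to `S`. -/
theorem stmt11 (n B : ℕ) (hn : 2 ≤ n) (hne : Even n) (hB : 0 < B) (b : ℕ → ℕ)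
    (hpos : ∀ i ∈ Finset.Icc 1 n, 0 < b i)
    (hbig : ∀ i ∈ Finset.Icc 1 (n - 2), 2 * B ≤ b i)
    (hb1 : b (n - 1) = B) (hb2 : b n = B)
    (hsum : ∑ i ∈ Finset.Icc 1 n, b i = (2 * n - 1) * B)
    (S : Finset ℕ) (hS : S ⊆ Finset.Icc 1 n)
    (hbal : ∑ i ∈ S, b i = ∑ i ∈ Finset.Icc 1 n \ S, b i) :
    S.card = n / 2 ∧ Xor' (n - 1 ∈ S) (n ∈ S) := by
  set w : ℕ → ℕ := fun i => if i = n - 1 ∨ i = n then 1 else 2 with hw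
  have hle : ∀ T ⊆ Finset.Icc 1 n, (∑ i ∈ T, w i) * B ≤ ∑ i ∈ T, b i := by
    intro T hT
    rw [Finset.sum_mul]
    refine Finset.sum_le_sum fun i hi => ?_
    have hi' := Finset.mem_Icc.mp (hT hi)
    by_cases h : i = n - 1 ∨ i = n
    · simp only [hw, if_pos h, one_mul]
      rcases h with rfl | rfl
      · exact hb1.ge
      · exact hb2.ge
    · simp only [hw, if_neg h]
      exact hbig i (Finset.mem_Icc.mpr (by omega))
  have hcard : ∀ T : Finset ℕ, (∑ i ∈ T, w i) + (if n - 1 ∈ T then 1 else 0)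
      + (if n ∈ T then 1 else 0) = 2 * T.card := by
    intro T
    rw [← Finset.sum_ite_eq' T (n - 1) (fun _ => 1), ← Finset.sum_ite_eq' T n (fun _ => 1),
      ← Finset.sum_add_distrib, ← Finset.sum_add_distrib, mul_comm, ← smul_eq_mul,
      ← Finset.sum_const]
    refine Finset.sum_congr rfl fun i _ => ?_
    simp only [hw]
    split_ifs <;> omega
  have hwtot := hcard (Finset.Icc 1 n)
  rw [if_pos (Finset.mem_Icc.mpr (by omega)), if_pos (Finset.mem_Icc.mpr (by omega)),
    Nat.card_Icc] at hwtot
  have hwsplit := Finset.sum_sdiff hS (f := w)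
  have hbsplit := Finset.sum_sdiff hS (f := b)
  have h1 := hle S hS
  have h2 := hle (Finset.Icc 1 n \ S) Finset.sdiff_subset
  have hbound : ∀ x : ℕ, x * B ≤ ∑ i ∈ S, b i → 2 * x ≤ 2 * n - 1 := by
    intro x hx
    refine Nat.le_of_mul_le_mul_right ?_ hB
    rw [mul_assoc, ← hsum]
    omega
  have h3 := hbound _ h1
  have h4 := hbound _ (hbal ▸ h2)
  have h5 := hcard S
  obtain ⟨m, rfl⟩ := hne
  by_cases ha : m + m - 1 ∈ S <;> by_cases hb : m + m ∈ S <;>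
    simp only [ha, hb, if_true, if_false] at h5 <;>
    simp only [ha, hb, Xor'] <;> first | (exfalso; omega) | (refine ⟨by omega, by simp⟩)
end

section
/- Let n be even and let b = (b_1,…,b_n) be a sequence of positive integers such that for some integer B > 0: b_i ≥ 2B for every i ∈ {1,…,n−2}, b_{n−1} = b_n = B, and ∑_{i=1}^n b_i = (2n−1)B. Suppose there exists S ⊆ {1,…,n} with ∑_{i∈S} b_i = ∑_{i∉S} b_i. Then b admits a sound permutation, i.e., a permutation π of {1,…,n} such that ∑_{i=1}^n (−1)^i b_{π(i)} = 0 and, for every k with 1 ≤ k < n, ∑_{i=1}^k (−1)^{i−1} b_{π(k−i+1)} > 0. -/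
/-!
Put `e i = b i - 2B ≥ 0` for the `n - 2` large entries; the total `(2n-1)B` forces `∑ e i = B`.
Compare the two sides of a balanced split: their excesses differ by at most `B`, and `n` is even, so
the two entries equal to `B` lie on different sides, each side contains `(n-2)/2` large
entries, and each side has excess exactly `B/2` (`balanced_split`).

The sound permutation starts with one entry `B`, then alternates large entries of the two sides,
and ends with the other entry `B`. The alternating partial sums `T k` satisfy
`T (k+1) = b (π (k+1)) - T k`, so the `2B`s cancel and `T k` equals `B` plus or minus the
difference of two partial sums of excesses (`altSum_formula`). Each such partial sum lies
in `[0, B/2]`, hence `T k ≥ B/2 > 0`, while the last `B` brings the sum to `0`.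
-/

/-- `π` is a sound permutation of `{1, …, n}` for the sequence `b 1, …, b n`:
it is a bijection of `{1, …, n}` onto itself such that
`∑_{i=1}^n (−1)^i b (π i) = 0` and, for every `1 ≤ k < n`, the alternating
partial sum `∑_{i=1}^k (−1)^{i−1} b (π (k−i+1))` is strictly positive. -/
def IsSoundPerm (n : ℕ) (b : ℕ → ℕ) (π : ℕ → ℕ) : Prop :=
  Set.BijOn π (Set.Icc 1 n) (Set.Icc 1 n) ∧
    (∑ i ∈ Finset.Icc 1 n, (-1 : ℤ) ^ i * (b (π i) : ℤ)) = 0 ∧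
    ∀ k ∈ Finset.Ico 1 n,
      0 < ∑ i ∈ Finset.Icc 1 k, (-1 : ℤ) ^ (i - 1) * (b (π (k - i + 1)) : ℤ)

/-- The alternating sum `g k - g (k-1) + g (k-2) - ⋯ ± g 1`, defined by recursion. -/
def altSum (g : ℕ → ℤ) : ℕ → ℤ
  | 0 => 0
  | k + 1 => g (k + 1) - altSum g k

theorem altSum_eq_sum (g : ℕ → ℤ) (k : ℕ) :
    ∑ i ∈ Finset.Icc 1 k, (-1 : ℤ) ^ i * g i = (-1) ^ k * altSum g k := by
  induction k with
  | zero => simp [altSum]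
  | succ k ih =>
    rw [Finset.sum_Icc_succ_top (by omega), ih, altSum]
    ring

theorem altSum_eq_sum_reflect (g : ℕ → ℤ) (k : ℕ) :
    ∑ i ∈ Finset.Icc 1 k, (-1 : ℤ) ^ (i - 1) * g (k - i + 1) = altSum g k := by
  induction k with
  | zero => simp [altSum]
  | succ k ih =>
    rw [altSum, ← ih, ← Finset.add_sum_Ioc_eq_sum_Icc (by omega), sub_eq_add_neg,
      ← Finset.sum_neg_distrib]
    congr 1
    · simp
    · refine Finset.sum_bij' (fun i _ => i - 1) (fun i _ => i + 1) ?_ ?_ ?_ ?_ ?_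
      · intro i hi; simp only [Finset.mem_Ioc, Finset.mem_Icc] at *; omega
      · intro i hi; simp only [Finset.mem_Ioc, Finset.mem_Icc] at *; omega
      · intro i hi; simp only [Finset.mem_Ioc] at *; omega
      · intro i hi; simp
      · intro i hi
        simp only [Finset.mem_Ioc] at hi
        obtain ⟨j, rfl⟩ : ∃ j, i = j + 2 := ⟨i - 2, by omega⟩
        have h1 : k + 1 - (j + 2) + 1 = k - (j + 2 - 1) + 1 := by omega
        have h2 : j + 2 - 1 = j + 1 := by omega
        rw [h1, h2, Nat.add_sub_cancel, pow_succ]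
        ring

/-- If `h 1 = B` and `h` then alternates between `2B + v j` and `2B + u j`, the `2B`s cancel
in the alternating sums. -/
theorem altSum_formula (h u v : ℕ → ℤ) (B : ℤ) (m : ℕ) (h1 : h 1 = B)
    (hv : ∀ j < m, h (2 * j + 2) = 2 * B + v j) (hu : ∀ j < m, h (2 * j + 3) = 2 * B + u j) :
    ∀ j ≤ m, altSum h (2 * j + 1) =
      B + ∑ i ∈ Finset.range j, u i - ∑ i ∈ Finset.range j, v i := by
  intro j
  induction j with
  | zero => intro _; simp [altSum, h1]
  | succ j ih =>
    intro hj
    have e : altSum h (2 * (j + 1) + 1) = h (2 * j + 3) - (h (2 * j + 2) - altSum h (2 * j + 1)) :=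
      rfl
    rw [e, ih (by omega), hv j (by omega), hu j (by omega), Finset.sum_range_succ,
      Finset.sum_range_succ]
    ring

theorem exists_enum (A : Finset ℕ) : ∃ f : ℕ → ℕ, Set.BijOn f (Finset.range A.card) A := by
  apply Set.Finite.exists_bijOn_of_encard_eq (Finset.finite_toSet _)
  simp only [Set.encard_coe_eq_coe_finsetCard, Finset.card_range]

theorem partial_sum_le (A : Finset ℕ) (e : ℕ → ℤ) (he : ∀ i ∈ A, 0 ≤ e i) (f : ℕ → ℕ)
    (hf : Set.BijOn f (Finset.range A.card) A) (j : ℕ) (hj : j ≤ A.card) :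
    0 ≤ ∑ i ∈ Finset.range j, e (f i) ∧
      ∑ i ∈ Finset.range j, e (f i) ≤ ∑ i ∈ A, e i := by
  have hm : ∀ i ∈ Finset.range A.card, 0 ≤ e (f i) := fun i hi => he _ (hf.mapsTo hi)
  have hs : Finset.range j ⊆ Finset.range A.card := Finset.range_subset_range.2 hj
  refine ⟨Finset.sum_nonneg fun i hi => hm i (hs hi), ?_⟩
  have h2 : ∑ i ∈ Finset.range A.card, e (f i) = ∑ i ∈ A, e i :=
    Finset.sum_nbij f hf.mapsTo hf.injOn hf.surjOn (fun _ _ => rfl)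
  rw [← h2]
  exact Finset.sum_le_sum_of_subset_of_nonneg hs fun i hi _ => hm i hi

theorem full_sum (A : Finset ℕ) (e : ℕ → ℤ) (f : ℕ → ℕ)
    (hf : Set.BijOn f (Finset.range A.card) A) :
    ∑ i ∈ Finset.range A.card, e (f i) = ∑ i ∈ A, e i :=
  Finset.sum_nbij f hf.mapsTo hf.injOn hf.surjOn (fun _ _ => rfl)

/-- The arrangement `B`, then large entries taken alternately from `C` and `A`, then `B`. -/
theorem sound_of_split (m B : ℕ) (hB : 0 < B) (b : ℕ → ℕ) (A C : Finset ℕ)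
    (hAm : A.card = m) (hCm : C.card = m)
    (hU : A ∪ C = Finset.Icc 1 (2 * m))
    (hbig : ∀ i ∈ Finset.Icc 1 (2 * m), 2 * B ≤ b i)
    (hb1 : b (2 * m + 1) = B) (hb2 : b (2 * m + 2) = B)
    (hA : 2 * ∑ i ∈ A, ((b i : ℤ) - 2 * B) = B) (hC : 2 * ∑ i ∈ C, ((b i : ℤ) - 2 * B) = B) :
    ∃ π : ℕ → ℕ, IsSoundPerm (2 * m + 2) b π := by
  obtain ⟨f, hf⟩ := exists_enum A
  obtain ⟨g, hg⟩ := exists_enum C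
  have hmA : ∀ i, i ∈ A → 1 ≤ i ∧ i ≤ 2 * m := fun i hi => by
    have := hU ▸ Finset.mem_union_left C hi
    simpa using this
  have hmC : ∀ i, i ∈ C → 1 ≤ i ∧ i ≤ 2 * m := fun i hi => by
    have := hU ▸ Finset.mem_union_right A hi
    simpa using this
  have heA : ∀ i ∈ A, 0 ≤ (b i : ℤ) - 2 * B := fun i hi => by
    have := hbig i (Finset.mem_Icc.2 (hmA i hi)); omega
  have heC : ∀ i ∈ C, 0 ≤ (b i : ℤ) - 2 * B := fun i hi => by
    have := hbig i (Finset.mem_Icc.2 (hmC i hi)); omega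
  have pA := partial_sum_le A _ heA f hf
  have pC := partial_sum_le C _ heC g hg
  have fA := full_sum A (fun i => (b i : ℤ) - 2 * B) f hf
  have fC := full_sum C (fun i => (b i : ℤ) - 2 * B) g hg
  rw [hAm] at hf pA fA
  rw [hCm] at hg pC fC
  let π : ℕ → ℕ := fun p => if p = 1 then 2 * m + 1 else if p = 2 * m + 2 then 2 * m + 2 else
    if p % 2 = 1 then f ((p - 3) / 2) else g ((p - 2) / 2)
  have π1 : π 1 = 2 * m + 1 := by simp [π]
  have πn : π (2 * m + 2) = 2 * m + 2 := by simp [π]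
  have πo : ∀ j < m, π (2 * j + 3) = f j := by
    intro j hj
    have h1 : 2 * j + 3 ≠ 2 * m + 2 := by omega
    have h2 : (2 * j + 3) % 2 = 1 := by omega
    have h3 : (2 * j + 3 - 3) / 2 = j := by omega
    simp only [π, h1, h2, h3]
    simp
  have πe : ∀ j < m, π (2 * j + 2) = g j := by
    intro j hj
    have h1 : 2 * j + 2 ≠ 2 * m + 2 := by omega
    have h2 : ¬ (2 * j + 2) % 2 = 1 := by omega
    have h3 : (2 * j + 2 - 2) / 2 = j := by omega
    simp only [π, h1, h2, h3]
    simp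
  have hcase : ∀ p, 1 ≤ p → p ≤ 2 * m + 2 → p = 1 ∨ p = 2 * m + 2 ∨
      (∃ j < m, p = 2 * j + 3) ∨ ∃ j < m, p = 2 * j + 2 := by
    intro p h1 h2
    rcases Nat.even_or_odd' p with ⟨c, rfl | rfl⟩
    · by_cases hc : c = m + 1
      · right; left; omega
      · right; right; right; exact ⟨c - 1, by omega, by omega⟩
    · by_cases hc : c = 0
      · left; omega
      · right; right; left; exact ⟨c - 1, by omega, by omega⟩
  have hfm : ∀ j < m, f j ∈ A := fun j hj => hf.mapsTo (by simpa using hj)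
  have hgm : ∀ j < m, g j ∈ C := fun j hj => hg.mapsTo (by simpa using hj)
  have hbij : Set.BijOn π (Set.Icc 1 (2 * m + 2)) (Set.Icc 1 (2 * m + 2)) := by
    have hmaps : Set.MapsTo π (Set.Icc 1 (2 * m + 2)) (Set.Icc 1 (2 * m + 2)) := by
      rintro p ⟨h1, h2⟩
      rcases hcase p h1 h2 with rfl | rfl | ⟨j, hj, rfl⟩ | ⟨j, hj, rfl⟩
      · rw [π1]; constructor <;> omega
      · rw [πn]; constructor <;> omega
      · rw [πo j hj]; have := hmA _ (hfm j hj); constructor <;> omega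
      · rw [πe j hj]; have := hmC _ (hgm j hj); constructor <;> omega
    have hsurj : Set.SurjOn π (Set.Icc 1 (2 * m + 2)) (Set.Icc 1 (2 * m + 2)) := by
      rintro q ⟨h1, h2⟩
      by_cases hq1 : q = 2 * m + 1
      · exact ⟨1, ⟨by omega, by omega⟩, by rw [π1, hq1]⟩
      by_cases hq2 : q = 2 * m + 2
      · exact ⟨2 * m + 2, ⟨by omega, by omega⟩, by rw [πn, hq2]⟩
      have hq : q ∈ A ∪ C := by rw [hU, Finset.mem_Icc]; omega
      rcases Finset.mem_union.1 hq with hq | hq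
      · obtain ⟨j, hj, rfl⟩ := hf.surjOn hq
        have hj : j < m := by simpa using hj
        exact ⟨2 * j + 3, ⟨by omega, by omega⟩, πo j hj⟩
      · obtain ⟨j, hj, rfl⟩ := hg.surjOn hq
        have hj : j < m := by simpa using hj
        exact ⟨2 * j + 2, ⟨by omega, by omega⟩, πe j hj⟩
    refine ⟨hmaps, ?_, hsurj⟩
    have := Finset.injOn_of_surjOn_of_card_le (s := Finset.Icc 1 (2 * m + 2))
      (t := Finset.Icc 1 (2 * m + 2)) π (by simpa using hmaps) (by simpa using hsurj) le_rfl
    simpa using this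
  have hform := altSum_formula (fun p => (b (π p) : ℤ)) (fun j => (b (f j) : ℤ) - 2 * B)
    (fun j => (b (g j) : ℤ) - 2 * B) B m (by simp only [π1, hb1])
    (fun j hj => by simp only [πe j hj]; ring) (fun j hj => by simp only [πo j hj]; ring)
  refine ⟨π, hbij, ?_, ?_⟩
  · have hlast : altSum (fun p => (b (π p) : ℤ)) (2 * m + 2) =
        (b (π (2 * m + 2)) : ℤ) - altSum (fun p => (b (π p) : ℤ)) (2 * m + 1) := rfl
    rw [altSum_eq_sum (fun p => (b (π p) : ℤ)), hlast, hform m le_rfl, πn, hb2, fA, fC]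
    have : (∑ i ∈ A, ((b i : ℤ) - 2 * B)) = ∑ i ∈ C, ((b i : ℤ) - 2 * B) := by linarith
    rw [this]; ring
  · intro k hk
    rw [Finset.mem_Ico] at hk
    rw [altSum_eq_sum_reflect (fun p => (b (π p) : ℤ))]
    have hB' : (0 : ℤ) < B := by exact_mod_cast hB
    rcases hcase k hk.1 hk.2.le with rfl | rfl | ⟨j, hj, rfl⟩ | ⟨j, hj, rfl⟩
    · simpa [altSum, π1, hb1] using hB
    · omega
    · have h1 := pA (j + 1) (by omega)
      have h2 := pC (j + 1) (by omega)
      have h3 := hform (j + 1) (by omega)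
      rw [show 2 * (j + 1) + 1 = 2 * j + 3 by ring] at h3
      linarith [h1.1, h2.2]
    · have h1 := pA j (by omega)
      have h2 := pC (j + 1) (by omega)
      have h3 := hform j (by omega)
      have h4 : altSum (fun p => (b (π p) : ℤ)) (2 * j + 2) =
        (b (π (2 * j + 2)) : ℤ) - altSum (fun p => (b (π p) : ℤ)) (2 * j + 1) := rfl
      rw [πe j hj] at h4
      rw [Finset.sum_range_succ] at h2
      linarith [h1.2, h2.1]

/-- `s`, `t` count the large entries on the two sides, `x`, `y` are their excesses, and `p`, `q`
the numbers of final entries `B` on the two sides. Balance says `(2s + p - 2t - q) B = y - x`, where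
the coefficient of `B` is even and `|y - x| ≤ B`, so both sides vanish; then `s + t = 2m` gives
`p = q = 1`. -/
theorem balanced_split (m : ℕ) (B s t x y p q : ℤ) (hB : 0 < B) (hx : 0 ≤ x) (hy : 0 ≤ y)
    (hxy : x + y = B) (hst : s + t = 2 * m) (hpq : p = 0 ∧ q = 2 ∨ p = 1 ∧ q = 1 ∨ p = 2 ∧ q = 0)
    (h : 2 * B * s + x + p * B = 2 * B * t + y + q * B) :
    s = m ∧ t = m ∧ 2 * x = B ∧ 2 * y = B := by
  have key : 2 * s + p = 2 * t + q := by
    rcases lt_trichotomy (2 * s + p) (2 * t + q) with hlt | heq | hgt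
    -- the two counts differ by an even number, hence by at least `2` if at all
    · have : 2 * s + p + 2 ≤ 2 * t + q := by omega
      nlinarith [mul_le_mul_of_nonneg_right this hB.le]
    · exact heq
    · have : 2 * t + q + 2 ≤ 2 * s + p := by omega
      nlinarith [mul_le_mul_of_nonneg_right this hB.le]
  have hxy' : x = y := by linear_combination h - B * key
  omega

/-- Let `n ≥ 2` be even and `b 1, …, b n` positive integers
such that for some `B > 0`: `b i ≥ 2B` for `i ∈ {1, …, n−2}`,
`b (n−1) = b n = B`, and `∑_{i=1}^n b i = (2n−1)B`. If some `S ⊆ {1, …, n}`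
satisfies `∑_{i ∈ S} b i = ∑_{i ∉ S} b i`, then `b` admits a sound
permutation. -/
theorem stmt12 (n B : ℕ) (hn : 2 ≤ n) (hne : Even n) (hB : 0 < B) (b : ℕ → ℕ)
    (hpos : ∀ i ∈ Finset.Icc 1 n, 0 < b i)
    (hbig : ∀ i ∈ Finset.Icc 1 (n - 2), 2 * B ≤ b i)
    (hb1 : b (n - 1) = B) (hb2 : b n = B)
    (hsum : ∑ i ∈ Finset.Icc 1 n, b i = (2 * n - 1) * B)
    (hex : ∃ S : Finset ℕ, S ⊆ Finset.Icc 1 n ∧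
      ∑ i ∈ S, b i = ∑ i ∈ Finset.Icc 1 n \ S, b i) :
    ∃ π : ℕ → ℕ, IsSoundPerm n b π := by
  obtain ⟨m, rfl⟩ : ∃ m, n = 2 * m + 2 := by
    obtain ⟨c, rfl⟩ := hne; exact ⟨c - 1, by omega⟩
  obtain ⟨S, hS, hSS⟩ := hex
  simp only [Nat.add_sub_cancel, show 2 * m + 2 - 1 = 2 * m + 1 by omega] at hbig hb1
  set I := Finset.Icc 1 (2 * m) with hI
  -- the sum over a subset `X` of the indices, split into large entries and the two last ones
  have split : ∀ P : ℕ → Prop, ∀ _ : DecidablePred P,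
      ∑ i ∈ (Finset.Icc 1 (2 * m + 2)).filter P, (b i : ℤ) =
        2 * B * ((I.filter P).card : ℤ) + ∑ i ∈ I.filter P, ((b i : ℤ) - 2 * B) +
          ((if P (2 * m + 1) then 1 else 0) + (if P (2 * m + 2) then 1 else 0)) * B := by
    intro P _
    rw [Finset.sum_filter, Finset.sum_Icc_succ_top (by omega), Finset.sum_Icc_succ_top (by omega),
      ← Finset.sum_filter, hb1, hb2, Finset.sum_sub_distrib, Finset.sum_const, nsmul_eq_mul]
    split_ifs <;> ring
  have hAf : S = (Finset.Icc 1 (2 * m + 2)).filter (· ∈ S) := by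
    ext i; simp only [Finset.mem_filter]; exact ⟨fun h => ⟨hS h, h⟩, fun h => h.2⟩
  have hCf : Finset.Icc 1 (2 * m + 2) \ S = (Finset.Icc 1 (2 * m + 2)).filter (· ∉ S) := by
    ext i; simp
  have eS : ∑ i ∈ S, (b i : ℤ) = ∑ i ∈ Finset.Icc 1 (2 * m + 2) \ S, (b i : ℤ) := by
    exact_mod_cast hSS
  rw [hCf, split (· ∉ S) inferInstance] at eS
  rw [show ∑ i ∈ S, (b i : ℤ) = ∑ i ∈ (Finset.Icc 1 (2 * m + 2)).filter (· ∈ S), (b i : ℤ) by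
    rw [← hAf], split (· ∈ S) inferInstance] at eS
  have eT : ∑ i ∈ Finset.Icc 1 (2 * m + 2), (b i : ℤ) = (4 * m + 3) * B := by
    have h : 2 * (2 * m + 2) - 1 = 4 * m + 3 := by omega
    rw [h] at hsum
    exact_mod_cast hsum
  have hcard : (I.filter (· ∈ S)).card + (I.filter (· ∉ S)).card = 2 * m := by
    rw [Finset.card_filter_add_card_filter_not, hI, Nat.card_Icc]; omega
  have hexc : ∑ i ∈ I.filter (· ∈ S), ((b i : ℤ) - 2 * B) +
      ∑ i ∈ I.filter (· ∉ S), ((b i : ℤ) - 2 * B) = B := by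
    rw [Finset.sum_filter_add_sum_filter_not, Finset.sum_sub_distrib, Finset.sum_const, hI,
      Nat.card_Icc, nsmul_eq_mul]
    rw [Finset.sum_Icc_succ_top (by omega), Finset.sum_Icc_succ_top (by omega), hb1, hb2] at eT
    simp only [Nat.add_sub_cancel]
    push_cast
    linarith
  have hnn : ∀ P : ℕ → Prop, ∀ _ : DecidablePred P,
      0 ≤ ∑ i ∈ I.filter P, ((b i : ℤ) - 2 * B) := fun P _ =>
    Finset.sum_nonneg fun i hi => by
      have := hbig i (Finset.mem_filter.1 hi).1; omega
  obtain ⟨h1, h2, h3, h4⟩ := balanced_split m B _ _ _ _ _ _ (by exact_mod_cast hB)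
    (hnn (· ∈ S) inferInstance) (hnn (· ∉ S) inferInstance) hexc (by exact_mod_cast hcard)
    (by by_cases u : 2 * m + 1 ∈ S <;> by_cases w : 2 * m + 2 ∈ S <;> simp [u, w]) eS
  exact sound_of_split m B hB b _ _ (by exact_mod_cast h1) (by exact_mod_cast h2)
    (Finset.filter_union_filter_not_eq _ _)
    hbig hb1 hb2 h3 h4
end

section
/- Let r be a positive integer, let d be a degree sequence, and let (a,b) be a balanced partition of d with largest entries a_1 and b_1 respectively (a and b nonincreasing). If a_1 · b_1 ≤ r · (∑d)/2 + r, then (a,b) is r-max-bigraphic. -/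
/-!
The multiplicities `m i j ≤ r` exist as soon as every set `A` of rows and every set `B` of columns
satisfy the Gale–Ryser type condition `∑_A a + ∑_B b ≤ S + r |A| |B|`, where `S` is the common sum
of `a` and `b` (`exists_matrix`).

This is Hall's theorem applied to the `p q r` unit cells `(i, j, c)`, `c < r`: each
cell is either used by column `j`, which offers `b j` slots, or wasted by row `i`, which offers
`q r - a i` slots. There are as many slots as cells, so a matching saturating the cells is a
bijection, and `m i j` counts the cells over `(i, j)` used by column `j`.

The condition follows from `a 1 * b 1 ≤ r (S + 1)` (`cut_le`). Put `x = ∑_A a`, `y = ∑_B b`,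
`t = r |A| |B|` and suppose `x + y ≥ S + t + 1`. As `x, y ≤ S`, the inequality
`(S - x) (S - y) ≥ 0` gives `x y ≥ S (t + 1)`, while `x y ≤ |A| |B| a₁ b₁ ≤ t (S + 1)`.
Hence `S ≤ t` and `x + y > 2 S`, a contradiction.
-/

/-- `m` is a bipartite multigraph with left degrees `a 1, …, a p` and right
degrees `b 1, …, b q` (1-indexed): a matrix of edge multiplicities whose `i`-th
row sum is `a i` and whose `j`-th column sum is `b j`. -/
def IsBipMG (p q : ℕ) (a b : ℕ → ℕ) (m : ℕ → ℕ → ℕ) : Prop :=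
  (∀ i ∈ Finset.Icc 1 p, ∑ j ∈ Finset.Icc 1 q, m i j = a i) ∧
    ∀ j ∈ Finset.Icc 1 q, ∑ i ∈ Finset.Icc 1 p, m i j = b j

/-- Total multiplicity of a bipartite multigraph given as a matrix:
`∑_{(i,j) : m i j ≥ 1} (m i j - 1)` (entries `0` contribute `0`). -/
def bipTotMult (p q : ℕ) (m : ℕ → ℕ → ℕ) : ℕ :=
  ∑ i ∈ Finset.Icc 1 p, ∑ j ∈ Finset.Icc 1 q, (m i j - 1)

/-- Maximum multiplicity of a bipartite multigraph given as a matrix. -/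
def bipMaxMult (p q : ℕ) (m : ℕ → ℕ → ℕ) : ℕ :=
  (Finset.Icc 1 p ×ˢ Finset.Icc 1 q).sup fun ij => m ij.1 ij.2

/-- `(a, b)` (with `a` of length `p` and `b` of length `q`) is a balanced
partition of the sequence `d 1, …, d n`: the concatenation of `a` and `b`
equals `d` as a multiset, and the two sides have equal sums. -/
def IsBalancedPartition (n : ℕ) (d : ℕ → ℕ) (p : ℕ) (a : ℕ → ℕ)
    (q : ℕ) (b : ℕ → ℕ) : Prop :=
  Multiset.map a (Finset.Icc 1 p).val + Multiset.map b (Finset.Icc 1 q).val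
      = Multiset.map d (Finset.Icc 1 n).val ∧
    ∑ i ∈ Finset.Icc 1 p, a i = ∑ j ∈ Finset.Icc 1 q, b j

/-- The pair `(a, b)` is bigraphic: there is a 0/1 matrix with row sums
`a 1, …, a p` and column sums `b 1, …, b q`. -/
def Bigraphic (p q : ℕ) (a b : ℕ → ℕ) : Prop :=
  ∃ m : ℕ → ℕ → ℕ, IsBipMG p q a b m ∧ ∀ i j, m i j ≤ 1

/-- A set of `k` rows with degrees at most `u` and degree sum `x`, together with a set of `l` columns
with degrees at most `v` and degree sum `y`, satisfies the Gale–Ryser condition. -/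
theorem cut_le {S x y k l u v r : ℕ} (hxS : x ≤ S) (hyS : y ≤ S) (hx : x ≤ k * u)
    (hy : y ≤ l * v) (h : u * v ≤ r * S + r) : x + y ≤ S + r * k * l := by
  by_contra! hc
  have h1 : x * y ≤ (r * k * l) * (S + 1) := by
    calc x * y ≤ (k * u) * (l * v) := Nat.mul_le_mul hx hy
      _ = (k * l) * (u * v) := by ring
      _ ≤ (k * l) * (r * S + r) := Nat.mul_le_mul le_rfl h
      _ = _ := by ring
  generalize r * k * l = t at *
  have h2 : S * (t + 1) ≤ x * y := by
    obtain ⟨c, rfl⟩ := Nat.exists_eq_add_of_le hxS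
    have : c + t + 1 ≤ y := by omega
    obtain ⟨e, he⟩ := Nat.exists_eq_add_of_le hyS
    have h3 : t + 1 + e ≤ x := by omega
    nlinarith [Nat.zero_le (c * e)]
  have : S ≤ t := by nlinarith
  omega

open Finset in
/-- Sufficiency in the Gale–Ryser theorem for matrices with entries at most `r`. -/
theorem exists_matrix {I J : Type} [Fintype I] [Fintype J] [DecidableEq I] [DecidableEq J]
    (r : ℕ) (a : I → ℕ) (b : J → ℕ) (hS : ∑ i, a i = ∑ j, b j)
    (hcut : ∀ (A : Finset I) (B : Finset J),
      ∑ i ∈ A, a i + ∑ j ∈ B, b j ≤ ∑ j, b j + r * #A * #B) :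
    ∃ m : I → J → ℕ, (∀ i, ∑ j, m i j = a i) ∧ (∀ j, ∑ i, m i j = b j) ∧ ∀ i j, m i j ≤ r := by
  have ha : ∀ i, a i ≤ Fintype.card J * r := fun i => by
    have := hcut {i} univ
    simp only [sum_singleton, card_singleton, card_univ] at this
    linarith
  -- `cap (inl i)` and `cap (inr j)` are the numbers of slots offered by row `i` and column `j`,
  -- and `t x` is the set of slots admissible for the cell `x`.
  let cap : I ⊕ J → ℕ := Sum.elim (fun i => Fintype.card J * r - a i) b
  let t : I × J × Fin r → Finset (Σ o, Fin (cap o)) := fun x =>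
    (({x.1} : Finset I).disjSum {x.2.1}).sigma fun _ => univ
  have capsum : ∀ (A : Finset I) (B : Finset J),
      #((A.disjSum B).sigma fun o => (univ : Finset (Fin (cap o)))) + ∑ i ∈ A, a i
        = #A * (Fintype.card J * r) + ∑ j ∈ B, b j := by
    intro A B
    have : ∑ i ∈ A, (Fintype.card J * r - a i) + ∑ i ∈ A, a i = #A * (Fintype.card J * r) := by
      rw [← sum_add_distrib, sum_congr rfl fun i _ => Nat.sub_add_cancel (ha i)]
      simp
    simp only [card_sigma, card_univ, Fintype.card_fin, sum_disjSum, cap, Sum.elim_inl,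
      Sum.elim_inr]
    omega
  obtain ⟨f, hinj, hf⟩ := (Finset.all_card_le_biUnion_card_iff_exists_injective t).1 (by
    intro X
    -- A set `X` of cells meeting the rows `R` and columns `C` has at most `r |R| |C|` elements, and
    -- Hall's condition for it is the cut condition for `R` and the complement of `C`.
    let R := X.image fun x => x.1
    let C := X.image fun x => x.2.1
    have hN : (R.disjSum C).sigma (fun o => (univ : Finset (Fin (cap o)))) ⊆ X.biUnion t := by
      rintro ⟨o, c⟩ ho
      simp only [mem_sigma, mem_univ, and_true] at ho
      rcases o with i | j
      · rw [inl_mem_disjSum, mem_image] at ho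
        obtain ⟨x, hx, rfl⟩ := ho
        exact mem_biUnion.2 ⟨x, hx, by simp [t]⟩
      · rw [inr_mem_disjSum, mem_image] at ho
        obtain ⟨x, hx, rfl⟩ := ho
        exact mem_biUnion.2 ⟨x, hx, by simp [t]⟩
    have hX : #X ≤ #R * (#C * r) := by
      calc #X ≤ #(R ×ˢ (C ×ˢ (univ : Finset (Fin r)))) := card_le_card fun x hx => by
            simp only [mem_product, mem_univ, and_true]
            exact ⟨mem_image_of_mem _ hx, mem_image_of_mem (fun x => x.2.1) hx⟩
        _ = _ := by simp
    have h1 := capsum R C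
    have h2 := hcut R Cᶜ
    have h3 := sum_add_sum_compl C b
    have h4 : #R * (Fintype.card J * r) = #R * (#C * r) + r * #R * #Cᶜ := by
      rw [← card_add_card_compl C]; ring
    have := card_le_card hN
    omega)
  have hbij : f.Bijective := by
    rw [Fintype.bijective_iff_injective_and_card]
    refine ⟨hinj, ?_⟩
    have h1 := capsum univ univ
    rw [hS] at h1
    rw [univ_disjSum_univ, univ_sigma_univ, card_univ, card_univ] at h1
    simp only [Fintype.card_prod, Fintype.card_fin]
    omega
  have hown : ∀ i j c, (f (i, j, c)).1 = Sum.inl i ∨ (f (i, j, c)).1 = Sum.inr j := by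
    intro i j c
    have := hf (i, j, c)
    generalize f (i, j, c) = s at this
    obtain ⟨o | o, _⟩ := s <;> simpa [t] using this
  -- `f` is a bijection, so every owner `o` receives exactly as many cells as it has slots.
  have hcard : ∀ o, ∑ i, ∑ j, #{c | (f (i, j, c)).1 = o} = cap o := by
    intro o
    calc _ = #{x | (f x).1 = o} := by
          simp only [card_filter, Fintype.sum_prod_type]
      _ = #{s : Σ o, Fin (cap o) | s.1 = o} := by
          rw [← Fintype.card_subtype, ← Fintype.card_subtype]
          exact Fintype.card_congr
            ((Equiv.ofBijective f hbij).subtypeEquiv fun x => by simp)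
      _ = cap o := by
          rw [← Fintype.card_subtype, Fintype.card_congr (Equiv.sigmaSubtype o),
            Fintype.card_fin]
  refine ⟨fun i j => #{c | (f (i, j, c)).1 = Sum.inr j}, fun i => ?_, fun j => ?_, fun i j => ?_⟩
  · have h1 : ∑ j, #{c | (f (i, j, c)).1 = Sum.inl i} = Fintype.card J * r - a i := by
      rw [show Fintype.card J * r - a i = cap (Sum.inl i) from rfl, ← hcard (Sum.inl i)]
      symm
      apply Fintype.sum_eq_single i
      refine fun i' hi' => sum_eq_zero fun j _ => card_eq_zero.2 (filter_eq_empty_iff.2 fun c _ h => ?_)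
      rcases hown i' j c with h' | h' <;> simp_all
    have h2 : ∑ j, #{c | (f (i, j, c)).1 = Sum.inr j} + ∑ j, #{c | (f (i, j, c)).1 = Sum.inl i}
        = Fintype.card J * r := by
      rw [← sum_add_distrib, ← card_univ, ← smul_eq_mul, ← sum_const]
      refine sum_congr rfl fun j _ => ?_
      rw [← card_union_of_disjoint, ← filter_or, filter_true_of_mem, card_univ, Fintype.card_fin]
      · exact fun c _ => (hown i j c).symm
      · exact disjoint_filter.2 fun c _ h h' => by simp_all
    have := ha i
    dsimp only
    omega
  · rw [show b j = cap (Sum.inr j) from rfl, ← hcard (Sum.inr j)]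
    refine sum_congr rfl fun i _ => Eq.symm ?_
    apply Fintype.sum_eq_single j
    refine fun j' hj' => card_eq_zero.2 (filter_eq_empty_iff.2 fun c _ h => ?_)
    rcases hown i j' c with h' | h' <;> simp_all
  · exact (card_filter_le _ _).trans (by simp)

/-- Let `r > 0`, let `d 1, …, d n` be a degree sequence, and
let `(a, b)` be a balanced partition of `d` with `a, b` nonincreasing (so the
largest entries are `a 1` and `b 1`). If `a 1 * b 1 ≤ r * (∑ d)/2 + r`, then
`(a, b)` is `r`-max-bigraphic. -/
theorem stmt15 (r n p q : ℕ) (hr : 0 < r) (hn : 0 < n) (hp : 0 < p) (hq : 0 < q)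
    (d a b : ℕ → ℕ)
    (hpos : ∀ i ∈ Finset.Icc 1 n, 0 < d i)
    (hmono : AntitoneOn d (Set.Icc 1 n))
    (heven : Even (∑ i ∈ Finset.Icc 1 n, d i))
    (hmonoa : AntitoneOn a (Set.Icc 1 p))
    (hmonob : AntitoneOn b (Set.Icc 1 q))
    (hbp : IsBalancedPartition n d p a q b)
    (h : a 1 * b 1 ≤ r * ((∑ i ∈ Finset.Icc 1 n, d i) / 2) + r) :
    ∃ m : ℕ → ℕ → ℕ, IsBipMG p q a b m ∧ bipMaxMult p q m ≤ r := by
  obtain ⟨hd, hS⟩ := hbp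
  have hsum : ∑ i ∈ Finset.Icc 1 n, d i
      = ∑ i ∈ Finset.Icc 1 p, a i + ∑ j ∈ Finset.Icc 1 q, b j := by
    have := congrArg Multiset.sum hd
    rw [Multiset.sum_add] at this
    exact this.symm
  rw [show (∑ i ∈ Finset.Icc 1 n, d i) / 2 = ∑ j ∈ Finset.Icc 1 q, b j by omega] at h
  have hSa : ∑ i : Finset.Icc 1 p, a i = ∑ i ∈ Finset.Icc 1 p, a i := Finset.sum_coe_sort _ a
  have hSb : ∑ j : Finset.Icc 1 q, b j = ∑ j ∈ Finset.Icc 1 q, b j := Finset.sum_coe_sort _ b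
  obtain ⟨m, hm1, hm2, hm3⟩ := exists_matrix (I := Finset.Icc 1 p) (J := Finset.Icc 1 q) r
    (fun i => a i) (fun j => b j) (by omega) (by
      intro A B
      refine cut_le (u := a 1) (v := b 1) ?_ ?_ ?_ ?_ (by rwa [hSb])
      · rw [hSb, ← hS, ← hSa]
        exact Finset.sum_le_sum_of_subset (Finset.subset_univ A)
      · exact Finset.sum_le_sum_of_subset (Finset.subset_univ B)
      · refine Finset.sum_le_card_nsmul _ _ _ fun i _ => ?_
        have hi := Finset.mem_Icc.1 i.2
        exact hmonoa ⟨le_rfl, hp⟩ hi hi.1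
      · refine Finset.sum_le_card_nsmul _ _ _ fun j _ => ?_
        have hj := Finset.mem_Icc.1 j.2
        exact hmonob ⟨le_rfl, hq⟩ hj hj.1)
  refine ⟨fun i j => if hij : i ∈ Finset.Icc 1 p ∧ j ∈ Finset.Icc 1 q
    then m ⟨i, hij.1⟩ ⟨j, hij.2⟩ else 0, ⟨fun i hi => ?_, fun j hj => ?_⟩, ?_⟩
  · rw [← hm1 ⟨i, hi⟩, ← Finset.sum_coe_sort]
    exact Finset.sum_congr rfl fun j _ => dif_pos ⟨hi, j.2⟩
  · rw [← hm2 ⟨j, hj⟩, ← Finset.sum_coe_sort]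
    exact Finset.sum_congr rfl fun i _ => dif_pos ⟨i.2, hj⟩
  · refine Finset.sup_le fun ij _ => ?_
    dsimp only
    split_ifs
    · exact hm3 _ _
    · exact Nat.zero_le r
end

section
/- Let r and k be positive integers with k ≥ 2, let q = r·k, let a = b = (q^{k−1}, q−1) (k−1 entries equal to q followed by one entry q−1), and let d = a ∘ b. Then a_1 · b_1 = q² = r · (∑d)/2 + r, the partition (a,b) is r-max-bigraphic, and there is no bipartite multigraph with left degrees a and right degrees b whose maximum multiplicity is at most r−1. -/
/-- A sequence equal to `c` on `1, …, k` except for the value `c - 1` in place `k`. -/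
theorem sum_lowered_last (c k : ℕ) (hc : 0 < c) (hk : 1 ≤ k) (f : ℕ → ℕ)
    (hf : ∀ i, 1 ≤ i → i < k → f i = c) (hl : f k = c - 1) :
    ∑ i ∈ Finset.Icc 1 k, f i = c * k - 1 := by
  obtain ⟨n, rfl⟩ : ∃ n, k = n + 1 := ⟨k - 1, by omega⟩
  rw [Finset.sum_Icc_succ_top (by omega), hl,
    Finset.sum_congr rfl (g := fun _ => c) (fun i hi => by
      rw [Finset.mem_Icc] at hi; exact hf i hi.1 (by omega))]
  simp only [Finset.sum_const, Nat.card_Icc, smul_eq_mul, Nat.add_sub_cancel]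
  rw [Nat.mul_add, Nat.mul_comm c n]
  omega

/-- Let `r, k` be positive integers with `k ≥ 2`, let
`q = r·k`, let `a = b = (q^{k−1}, q−1)` (k−1 entries `q` followed by one entry
`q−1`), and let `d = a ∘ b`. Then `a 1 * b 1 = q² = r·(∑ d)/2 + r`, the
partition `(a, b)` is `r`-max-bigraphic, but it is not `(r−1)`-max-bigraphic. -/
theorem stmt16 (r k : ℕ) (hr : 0 < r) (hk : 2 ≤ k) :
    let q := r * k
    let a : ℕ → ℕ := fun i => if i ≤ k - 1 then q else q - 1
    let d : ℕ → ℕ := fun i => if i ≤ k then a i else a (i - k)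
    a 1 * a 1 = q ^ 2 ∧
      q ^ 2 = r * ((∑ i ∈ Finset.Icc 1 (2 * k), d i) / 2) + r ∧
      (∃ m : ℕ → ℕ → ℕ, IsBipMG k k a a m ∧ bipMaxMult k k m ≤ r) ∧
      ¬∃ m : ℕ → ℕ → ℕ, IsBipMG k k a a m ∧ bipMaxMult k k m ≤ r - 1 := by
  intro q a d
  have hq : 0 < q := Nat.mul_pos hr (by omega)
  have ha : ∀ i, i < k → a i = q := fun i hi => if_pos (by omega)
  have hak : a k = q - 1 := if_neg (by omega)
  have hsum : ∑ i ∈ Finset.Icc 1 k, a i = q * k - 1 :=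
    sum_lowered_last q k hq (by omega) a (fun i _ h => ha i h) hak
  refine ⟨by rw [ha 1 (by omega), sq], ?_, ?_, ?_⟩
  · have hd : ∑ i ∈ Finset.Icc 1 (2 * k), d i = 2 * (q * k - 1) := by
      have e1 : ∑ i ∈ Finset.Ioc 0 k, d i = q * k - 1 := by
        rw [← hsum]
        exact Finset.sum_congr rfl fun i hi => if_pos (Finset.mem_Ioc.1 hi).2
      have e2 : ∑ i ∈ Finset.Ioc k (2 * k), d i = q * k - 1 := by
        rw [← hsum]
        refine Finset.sum_nbij' (fun i => i - k) (fun i => i + k) ?_ ?_ ?_ ?_ ?_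
        all_goals intro i hi
        all_goals simp only [Finset.mem_Ioc, Finset.mem_Icc] at hi ⊢
        any_goals omega
        exact if_neg (by omega)
      have e3 := Finset.sum_Ioc_consecutive d (Nat.zero_le k) (show k ≤ 2 * k by omega)
      change ∑ i ∈ Finset.Ioc 0 (2 * k), d i = _
      omega
    rw [hd, Nat.mul_div_cancel_left _ (by omega : 0 < 2)]
    have hpos : 1 ≤ q * k := Nat.mul_pos hq (by omega)
    calc q ^ 2 = r * (q * k) := by simp only [q]; ring
      _ = r * (q * k - 1 + 1) := by rw [Nat.sub_add_cancel hpos]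
      _ = r * (q * k - 1) + r := by ring
  · have hrow : ∀ i ∈ Finset.Icc 1 k,
        ∑ j ∈ Finset.Icc 1 k, (if i = k ∧ j = k then r - 1 else r) = a i := by
      intro i hi
      rw [Finset.mem_Icc] at hi
      rcases hi.2.lt_or_eq with h | rfl
      · rw [ha i h]
        simp [h.ne, q, Nat.mul_comm]
      · rw [hak]
        exact sum_lowered_last r i hr hi.1 _ (fun j _ hj => by simp [hj.ne]) (by simp)
    refine ⟨fun i j => if i = k ∧ j = k then r - 1 else r, ⟨hrow, ?_⟩, ?_⟩
    · intro j hj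
      rw [← hrow j hj]
      exact Finset.sum_congr rfl fun i _ => by simp only [and_comm]
    · refine Finset.sup_le fun ij _ => ?_
      dsimp only
      split_ifs <;> omega
  · rintro ⟨m, ⟨hrow, -⟩, hm⟩
    have h1 : 1 ∈ Finset.Icc 1 k := Finset.mem_Icc.2 ⟨le_rfl, by omega⟩
    have hle : ∑ j ∈ Finset.Icc 1 k, m 1 j ≤ ∑ j ∈ Finset.Icc 1 k, (r - 1) :=
      Finset.sum_le_sum fun j hj =>
        (Finset.le_sup (f := fun ij : ℕ × ℕ => m ij.1 ij.2)
          (Finset.mem_product.2 ⟨h1, hj⟩ : (1, j) ∈ _)).trans hm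
    rw [hrow 1 h1, ha 1 (by omega)] at hle
    simp only [Finset.sum_const, Nat.card_Icc, smul_eq_mul, Nat.add_sub_cancel] at hle
    have hlt : k * (r - 1) < k * r := Nat.mul_lt_mul_of_pos_left (by omega) (by omega)
    have hqe : q = k * r := Nat.mul_comm r k
    omega
end

section
/- Let r be a positive integer and let d be a degree sequence that admits at least one balanced partition. If d_1² ≤ r · (∑d)/2 + r, where d_1 is the largest entry of d, then every balanced partition (a,b) of d is r-max-bigraphic. -/
/-- The numerical core: a violated cut would force `(S + 1 - A) * (S + 1 - B) ≤ 0`. -/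
theorem cut_bound {r S D A B k l : ℕ} (hD : D ^ 2 ≤ r * S + r) (hA : A ≤ S) (hB : B ≤ S)
    (hAk : A ≤ k * D) (hBl : B ≤ l * D) : A + B ≤ S + r * k * l := by
  by_contra! hlt
  have h1 : A * B ≤ (k * D) * (l * D) := Nat.mul_le_mul hAk hBl
  have h2 : k * l * D ^ 2 ≤ k * l * (r * S + r) := Nat.mul_le_mul_left _ hD
  have h3 : (S + r * k * l + 1) * (S + 1) ≤ (A + B) * (S + 1) := Nat.mul_le_mul_right _ hlt
  zify at *
  nlinarith [mul_nonneg (sub_nonneg.2 hA) (sub_nonneg.2 hB)]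

/-- Gale–Ryser criterion with multiplicity bound `r`: the cut inequalities suffice for a
nonnegative integer matrix with prescribed line sums and entries at most `r`. -/
theorem exists_matrix_of_cut {L R : Type} [Fintype L] [Fintype R] [DecidableEq L]
    [DecidableEq R] (r : ℕ) (a : L → ℕ) (b : R → ℕ) (hab : ∑ i, a i = ∑ j, b j)
    (hcut : ∀ (I : Finset L) (J : Finset R),
      ∑ i ∈ I, a i + ∑ j ∈ J, b j ≤ ∑ i, a i + r * I.card * J.card) :
    ∃ m : L → R → ℕ, (∀ i, ∑ j, m i j = a i) ∧ (∀ j, ∑ i, m i j = b j) ∧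
      ∀ i j, m i j ≤ r := by
  have ha : ∀ i, a i ≤ r * Fintype.card R := by
    intro i
    have := hcut {i} Finset.univ
    simp only [Finset.sum_singleton, Finset.card_singleton, Finset.card_univ] at this
    rw [← hab] at this
    linarith
  let Y := (Σ j : R, Fin (b j)) ⊕ (Σ i : L, Fin (r * Fintype.card R - a i))
  let t : Y → Finset (L × R × Fin r) := Sum.elim
    (fun y => Finset.univ.filter fun x => x.2.1 = y.1)
    (fun y => Finset.univ.filter fun x => x.1 = y.1)
  have hslack : ∀ I : Finset L, ∑ i ∈ I, (r * Fintype.card R - a i) + ∑ i ∈ I, a i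
      = I.card * (r * Fintype.card R) := by
    intro I
    rw [← Finset.sum_add_distrib, Finset.sum_congr rfl fun i _ => Nat.sub_add_cancel (ha i)]
    simp
  have hall : ∀ T : Finset Y, T.card ≤ (T.biUnion t).card := by
    intro T
    let J : Finset R := T.toLeft.image Sigma.fst
    let I : Finset L := T.toRight.image Sigma.fst
    have h1 : T.toLeft.card ≤ ∑ j ∈ J, b j := by
      calc T.toLeft.card ≤ (J.sigma fun j => (Finset.univ : Finset (Fin (b j)))).card := by
            apply Finset.card_le_card
            intro y hy
            simp only [Finset.mem_sigma, Finset.mem_univ, and_true]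
            exact Finset.mem_image_of_mem _ hy
        _ = _ := by simp
    have h2 : T.toRight.card ≤ ∑ i ∈ I, (r * Fintype.card R - a i) := by
      calc T.toRight.card ≤ (I.sigma fun i =>
              (Finset.univ : Finset (Fin (r * Fintype.card R - a i)))).card := by
            apply Finset.card_le_card
            intro y hy
            simp only [Finset.mem_sigma, Finset.mem_univ, and_true]
            exact Finset.mem_image_of_mem _ hy
        _ = _ := by simp
    have h3 : (I ×ˢ (Finset.univ : Finset (R × Fin r)) ∪
        Iᶜ ×ˢ (J ×ˢ (Finset.univ : Finset (Fin r)))).card ≤ (T.biUnion t).card := by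
      apply Finset.card_le_card
      rintro ⟨i, j, s⟩ hx
      simp only [Finset.mem_union, Finset.mem_product, Finset.mem_univ, and_true] at hx
      rw [Finset.mem_biUnion]
      rcases hx with hi | ⟨-, hj⟩
      · obtain ⟨y, hy, hyi⟩ := Finset.mem_image.1 hi
        exact ⟨Sum.inr y, Finset.mem_toRight.1 hy, by simp [t, hyi]⟩
      · obtain ⟨y, hy, hyj⟩ := Finset.mem_image.1 hj
        exact ⟨Sum.inl y, Finset.mem_toLeft.1 hy, by simp [t, hyj]⟩
    rw [Finset.card_union_of_disjoint] at h3
    · simp only [Finset.card_product, Finset.card_univ, Fintype.card_prod, Fintype.card_fin] at h3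
      have h4 := hcut Iᶜ J
      have h5 := hslack I
      have h6 := Finset.sum_add_sum_compl I a
      have h7 := Finset.card_toLeft_add_card_toRight (u := T)
      nlinarith
    · rw [Finset.disjoint_left]
      rintro ⟨i, j, s⟩ hx hy
      simp only [Finset.mem_product, Finset.mem_compl] at hx hy
      exact hy.1 hx.1
  obtain ⟨f, hf, hft⟩ := (Finset.all_card_le_biUnion_card_iff_exists_injective t).1 hall
  have hcard : Fintype.card Y = Fintype.card (L × R × Fin r) := by
    have h5 := hslack Finset.univ
    rw [Finset.card_univ] at h5
    simp only [Y, Fintype.card_sum, Fintype.card_sigma, Fintype.card_fin, Fintype.card_prod]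
    linarith
  have hbij : Function.Bijective f := (Fintype.bijective_iff_injective_and_card f).2 ⟨hf, hcard⟩
  have hcol : ∀ y, (f (Sum.inl y)).2.1 = y.1 := fun y => by simpa [t] using hft (Sum.inl y)
  have hrow : ∀ y, (f (Sum.inr y)).1 = y.1 := fun y => by simpa [t] using hft (Sum.inr y)
  have hfib : ∀ {K : Type} [Fintype K] [DecidableEq K] (g : K → ℕ) (k : K),
      (Finset.univ.filter fun y : (Σ k, Fin (g k)) => y.1 = k).card = g k := by
    intro K _ _ g k
    have : (Finset.univ.filter fun y : (Σ k, Fin (g k)) => y.1 = k)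
        = ({k} : Finset K).sigma fun k => (Finset.univ : Finset (Fin (g k))) := by
      ext y
      simp
    rw [this]
    simp
  refine ⟨fun i j => (Finset.univ.filter fun y : (Σ j : R, Fin (b j)) =>
    (f (Sum.inl y)).1 = i ∧ y.1 = j).card, fun i => ?_, fun j => ?_, fun i j => ?_⟩
  ·
    have h1 : ((Finset.univ.filter fun y : Y => (f y).1 = i)).card = r * Fintype.card R := by
      have : (Finset.univ.filter fun y : Y => (f y).1 = i).card
          = (({i} : Finset L) ×ˢ (Finset.univ : Finset (R × Fin r))).card := by
        refine Finset.card_bij (fun y _ => f y) ?_ (fun _ _ _ _ e => hf e) ?_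
        · intro y hy
          exact Finset.mem_product.2 ⟨by simpa using hy, Finset.mem_univ _⟩
        · intro x hx
          obtain ⟨y, rfl⟩ := hbij.2 x
          exact ⟨y, by simpa using (Finset.mem_product.1 hx).1, rfl⟩
      rw [this]
      simp [mul_comm]
    have h2 := Finset.card_toLeft_add_card_toRight
      (u := Finset.univ.filter fun y : Y => (f y).1 = i)
    have h3 : (Finset.univ.filter fun y : Y => (f y).1 = i).toRight
        = Finset.univ.filter fun y : (Σ i : L, Fin (r * Fintype.card R - a i)) => y.1 = i := by
      ext y
      simp [hrow]
    have h4 : (Finset.univ.filter fun y : Y => (f y).1 = i).toLeft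
        = Finset.univ.filter fun y : (Σ j : R, Fin (b j)) => (f (Sum.inl y)).1 = i := by
      ext y
      simp
    rw [h3, h4, hfib, h1] at h2
    have h5 := Finset.card_eq_sum_card_fiberwise (t := (Finset.univ : Finset R))
      (s := Finset.univ.filter fun y : (Σ j : R, Fin (b j)) => (f (Sum.inl y)).1 = i)
      (f := fun y => y.1) (by intro _ _; simp)
    simp only [Finset.filter_filter] at h5
    have := ha i
    beta_reduce
    rw [← h5]
    omega
  · have h5 := Finset.card_eq_sum_card_fiberwise (t := (Finset.univ : Finset L))
      (s := Finset.univ.filter fun y : (Σ j : R, Fin (b j)) => y.1 = j)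
      (f := fun y => (f (Sum.inl y)).1) (by intro _ _; simp)
    rw [hfib] at h5
    simp only [Finset.filter_filter] at h5
    rw [h5]
    exact Finset.sum_congr rfl fun i _ => by simp only [and_comm]
  · calc _ ≤ (Finset.univ : Finset (Fin r)).card := by
          refine Finset.card_le_card_of_injOn (fun y => (f (Sum.inl y)).2.2)
            (fun _ _ => by simp) ?_
          intro y hy z hz e
          simp only [Finset.coe_filter, Finset.mem_univ, true_and, Set.mem_ofPred_eq] at hy hz
          have : f (Sum.inl y) = f (Sum.inl z) :=
            Prod.ext (hy.1.trans hz.1.symm)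
              (Prod.ext (by rw [hcol, hcol, hy.2, hz.2]) e)
          exact Sum.inl_injective (hf this)
      _ = r := by simp

/-- Let `r > 0` and let `d 1, …, d n` be a degree sequence
(nonincreasing, so `d 1` is the largest entry) admitting at least one balanced
partition. If `(d 1)² ≤ r·(∑ d)/2 + r`, then every balanced partition `(a, b)`
of `d` is `r`-max-bigraphic. -/
theorem stmt17 (r n : ℕ) (hr : 0 < r) (hn : 0 < n) (d : ℕ → ℕ)
    (hpos : ∀ i ∈ Finset.Icc 1 n, 0 < d i)
    (hmono : AntitoneOn d (Set.Icc 1 n))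
    (heven : Even (∑ i ∈ Finset.Icc 1 n, d i))
    (hex : ∃ (p : ℕ) (a : ℕ → ℕ) (q : ℕ) (b : ℕ → ℕ),
      IsBalancedPartition n d p a q b)
    (h : d 1 ^ 2 ≤ r * ((∑ i ∈ Finset.Icc 1 n, d i) / 2) + r) :
    ∀ (p : ℕ) (a : ℕ → ℕ) (q : ℕ) (b : ℕ → ℕ),
      IsBalancedPartition n d p a q b →
        ∃ m : ℕ → ℕ → ℕ, IsBipMG p q a b m ∧ bipMaxMult p q m ≤ r := by
  intro p a q b ⟨hms, hsum⟩
  have hd : ∀ x ∈ Multiset.map d (Finset.Icc 1 n).val, x ≤ d 1 := by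
    intro x hx
    obtain ⟨i, hi, rfl⟩ := Multiset.mem_map.1 hx
    have hi' := Finset.mem_Icc.1 (Finset.mem_def.2 hi)
    exact hmono ⟨le_rfl, hn⟩ hi' hi'.1
  have ha : ∀ i ∈ Finset.Icc 1 p, a i ≤ d 1 := fun i hi =>
    hd _ (hms ▸ Multiset.mem_add.2 (Or.inl (Multiset.mem_map_of_mem a hi)))
  have hb : ∀ j ∈ Finset.Icc 1 q, b j ≤ d 1 := fun j hj =>
    hd _ (hms ▸ Multiset.mem_add.2 (Or.inr (Multiset.mem_map_of_mem b hj)))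
  have htot : ∑ i ∈ Finset.Icc 1 p, a i + ∑ j ∈ Finset.Icc 1 q, b j
      = ∑ i ∈ Finset.Icc 1 n, d i := by
    have := congrArg Multiset.sum hms
    rwa [Multiset.sum_add] at this
  have hS : (∑ i ∈ Finset.Icc 1 n, d i) / 2 = ∑ i ∈ Finset.Icc 1 p, a i := by omega
  rw [hS] at h
  have hca : ∑ i : Finset.Icc 1 p, a i = ∑ i ∈ Finset.Icc 1 p, a i := Finset.sum_coe_sort _ a
  have hcb : ∑ j : Finset.Icc 1 q, b j = ∑ j ∈ Finset.Icc 1 q, b j := Finset.sum_coe_sort _ b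
  obtain ⟨m, hm1, hm2, hm3⟩ := exists_matrix_of_cut (L := Finset.Icc 1 p) (R := Finset.Icc 1 q) r
    (fun i => a i) (fun j => b j) (by rw [hca, hcb, hsum]) (by
      intro I J
      rw [hca]
      refine cut_bound h ?_ ?_ ?_ ?_
      · rw [← hca]
        exact Finset.sum_le_univ_sum_of_nonneg fun _ => Nat.zero_le _
      · rw [hsum, ← hcb]
        exact Finset.sum_le_univ_sum_of_nonneg fun _ => Nat.zero_le _
      · exact Finset.sum_le_card_nsmul _ _ _ fun i _ => ha i i.2
      · exact Finset.sum_le_card_nsmul _ _ _ fun j _ => hb j j.2)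
  -- Extend the matrix by zero outside the index rectangle.
  let M : ℕ → ℕ → ℕ := fun i j =>
    if hij : i ∈ Finset.Icc 1 p ∧ j ∈ Finset.Icc 1 q then m ⟨i, hij.1⟩ ⟨j, hij.2⟩ else 0
  have hM : ∀ (i : Finset.Icc 1 p) (j : Finset.Icc 1 q), M i j = m i j := fun i j =>
    dif_pos ⟨i.2, j.2⟩
  refine ⟨M, ⟨fun i hi => ?_, fun j hj => ?_⟩, ?_⟩
  · rw [← hm1 ⟨i, hi⟩, ← Finset.sum_coe_sort]
    exact Finset.sum_congr rfl fun j _ => hM ⟨i, hi⟩ j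
  · rw [← hm2 ⟨j, hj⟩, ← Finset.sum_coe_sort]
    exact Finset.sum_congr rfl fun i _ => hM i ⟨j, hj⟩
  · refine Finset.sup_le fun ij hij => ?_
    obtain ⟨hi, hj⟩ := Finset.mem_product.1 hij
    exact (hM ⟨_, hi⟩ ⟨_, hj⟩).trans_le (hm3 _ _)
end

section
/- Let t be a positive integer, let d be a degree sequence, and let (a,b) be a balanced partition of d with largest entries a_1 and b_1 respectively (a and b nonincreasing). If a_1 · b_1 ≤ (∑d)/2 + t + 1, then (a,b) is t-tot-bigraphic. -/
/-!
The minimum total multiplicity is controlled by a maximum flow. Put `S = ∑ a = ∑ b`. Suppose a 0/1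
matrix `f` has row sums at most `a`, column sums at most `b` and at least `S - t` ones. Then the
residual degrees can be realised by any matrix `g`, and `f + g` has margins `a`, `b` and total
multiplicity at most `∑ g ≤ t`.

Such an `f` exists by the bipartite max-flow/min-cut theorem `exists_of_le_bcut`, which is proved by
induction on the total capacity, using submodularity of the cut function (`bcut_submodular`): a unit
of capacity is either discarded or used, and if both moves destroyed the cut condition, then
uncrossing the two cuts responsible would give a violated cut. The same theorem, with capacities
large enough never to bind, supplies `g`.

The cut condition says `a(K) + b(L) ≤ S + t + k * l` for sets `K` of `k` rows and `L` of `l` columns.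
If `l ≥ a 1` then `a(K) ≤ k * a 1 ≤ k * l`, and it holds; likewise if `k ≥ b 1`. Otherwise
`a(K) + b(L) - k * l ≤ k * a 1 + l * b 1 - k * l = a 1 * b 1 - (a 1 - l) * (b 1 - k) ≤ a 1 * b 1 - 1`,
and the hypothesis on `a 1 * b 1` applies.
-/

/-- Capacity of the cut `(I, J)` in the bipartite network with rows `A`, columns `B`, row capacities
`a`, column capacities `b` and cell capacities `c`: the rows in `I` and the columns in `J` are cut at
the source and sink, and every cell outside `I` and `J` is cut itself. Only the traces of `I` on `A`
and of `J` on `B` matter. -/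
def bcut (A B : Finset ℕ) (a b : ℕ → ℕ) (c : ℕ → ℕ → ℕ) (I J : Finset ℕ) : ℕ :=
  (∑ i ∈ A, if i ∈ I then a i else 0) + (∑ j ∈ B, if j ∈ J then b j else 0) +
    ∑ i ∈ A, ∑ j ∈ B, if i ∉ I ∧ j ∉ J then c i j else 0

theorem bcut_submodular (A B : Finset ℕ) (a b : ℕ → ℕ) (c : ℕ → ℕ → ℕ) (I J I' J' : Finset ℕ) :
    bcut A B a b c (I ∪ I') (J ∩ J') + bcut A B a b c (I ∩ I') (J ∪ J') ≤
      bcut A B a b c I J + bcut A B a b c I' J' := by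
  have h1 : (∑ i ∈ A, if i ∈ I ∪ I' then a i else 0) + (∑ i ∈ A, if i ∈ I ∩ I' then a i else 0) ≤
      (∑ i ∈ A, if i ∈ I then a i else 0) + (∑ i ∈ A, if i ∈ I' then a i else 0) := by
    simp only [← Finset.sum_add_distrib]
    refine Finset.sum_le_sum fun i _ => ?_
    by_cases h : i ∈ I <;> by_cases h' : i ∈ I' <;> simp [h, h']
  have h2 : (∑ j ∈ B, if j ∈ J ∩ J' then b j else 0) + (∑ j ∈ B, if j ∈ J ∪ J' then b j else 0) ≤
      (∑ j ∈ B, if j ∈ J then b j else 0) + (∑ j ∈ B, if j ∈ J' then b j else 0) := by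
    simp only [← Finset.sum_add_distrib]
    refine Finset.sum_le_sum fun i _ => ?_
    by_cases h : i ∈ J <;> by_cases h' : i ∈ J' <;> simp [h, h']
  have h3 : (∑ i ∈ A, ∑ j ∈ B, if i ∉ I ∪ I' ∧ j ∉ J ∩ J' then c i j else 0) +
      (∑ i ∈ A, ∑ j ∈ B, if i ∉ I ∩ I' ∧ j ∉ J ∪ J' then c i j else 0) ≤
      (∑ i ∈ A, ∑ j ∈ B, if i ∉ I ∧ j ∉ J then c i j else 0) +
      (∑ i ∈ A, ∑ j ∈ B, if i ∉ I' ∧ j ∉ J' then c i j else 0) := by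
    simp only [← Finset.sum_add_distrib]
    refine Finset.sum_le_sum fun i _ => Finset.sum_le_sum fun j _ => ?_
    by_cases h : i ∈ I <;> by_cases h' : i ∈ I' <;> by_cases k : j ∈ J <;>
      by_cases k' : j ∈ J' <;> simp [h, h', k, k']
  unfold bcut
  omega

/-- The unit matrix with a single one, at `(i, j)`. -/
def cellUnit (i j i' j' : ℕ) : ℕ := if i' = i ∧ j' = j then 1 else 0

theorem sum_cellUnit_row {B : Finset ℕ} {j : ℕ} (hj : j ∈ B) (i i' : ℕ) :
    ∑ j' ∈ B, cellUnit i j i' j' = if i' = i then 1 else 0 := by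
  by_cases h : i' = i <;> simp [cellUnit, h, hj]

theorem sum_cellUnit_col {A : Finset ℕ} {i : ℕ} (hi : i ∈ A) (j j' : ℕ) :
    ∑ i' ∈ A, cellUnit i j i' j' = if j' = j then 1 else 0 := by
  by_cases h : j' = j <;> simp [cellUnit, h, hi]

theorem bcut_add_cell {A B : Finset ℕ} {i j : ℕ} (hi : i ∈ A) (hj : j ∈ B) (a b : ℕ → ℕ)
    (c : ℕ → ℕ → ℕ) (I J : Finset ℕ) :
    bcut A B a b (fun x y => c x y + cellUnit i j x y) I J =
      bcut A B a b c I J + if i ∉ I ∧ j ∉ J then 1 else 0 := by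
  have h : (∑ x ∈ A, ∑ y ∈ B, if x ∉ I ∧ y ∉ J then cellUnit i j x y else 0) =
      if i ∉ I ∧ j ∉ J then 1 else 0 := by
    rw [Finset.sum_eq_single_of_mem i hi, Finset.sum_eq_single_of_mem j hj]
    · simp [cellUnit]
    · intro y _ hy
      simp [cellUnit, hy]
    · intro x _ hx
      simp [cellUnit, hx]
  rw [← h]
  unfold bcut
  have h' : (∑ x ∈ A, ∑ y ∈ B, if x ∉ I ∧ y ∉ J then c x y + cellUnit i j x y else 0) =
      (∑ x ∈ A, ∑ y ∈ B, if x ∉ I ∧ y ∉ J then c x y else 0) +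
      ∑ x ∈ A, ∑ y ∈ B, if x ∉ I ∧ y ∉ J then cellUnit i j x y else 0 := by
    simp only [← Finset.sum_add_distrib]
    refine Finset.sum_congr rfl fun x _ => Finset.sum_congr rfl fun y _ => ?_
    split_ifs <;> simp
  rw [h']
  omega

/-- Lowering a positive capacity `a i` by one lowers `a(I)` exactly when `i ∈ I`. -/
theorem sum_ite_pred {A : Finset ℕ} {i : ℕ} (hi : i ∈ A) (a : ℕ → ℕ) (hpos : 0 < a i)
    (I : Finset ℕ) :
    (∑ x ∈ A, if x ∈ I then a x else 0) =
      (∑ x ∈ A, if x ∈ I then (a x - if x = i then 1 else 0) else 0) +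
        if i ∈ I then 1 else 0 := by
  have h : (if i ∈ I then 1 else 0) = ∑ x ∈ A, if x ∈ I then (if x = i then 1 else 0) else 0 := by
    rw [Finset.sum_eq_single_of_mem i hi]
    · simp
    · intro x _ hx
      simp [hx]
  rw [h, ← Finset.sum_add_distrib]
  refine Finset.sum_congr rfl fun x _ => ?_
  by_cases hx : x = i
  · subst hx
    split_ifs <;> omega
  · simp [hx]

/-- Lowering the capacities `a i`, `b j` of a positive row and column by one. -/
theorem bcut_pred {A B : Finset ℕ} {i j : ℕ} (hi : i ∈ A) (hj : j ∈ B) (a b : ℕ → ℕ)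
    (ha : 0 < a i) (hb : 0 < b j) (c : ℕ → ℕ → ℕ) (I J : Finset ℕ) :
    bcut A B a b c I J =
      bcut A B (fun x => a x - if x = i then 1 else 0) (fun y => b y - if y = j then 1 else 0) c I J +
        ((if i ∈ I then 1 else 0) + if j ∈ J then 1 else 0) := by
  have h1 := sum_ite_pred hi a ha I
  have h2 := sum_ite_pred hj b hb J
  simp only [bcut]
  omega

/-- Moving the row `i` into a cut costs at most its capacity `a i`. -/
theorem bcut_insert_row {A : Finset ℕ} {i : ℕ} (hi : i ∈ A) (B : Finset ℕ) (a b : ℕ → ℕ)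
    (c : ℕ → ℕ → ℕ) (I J : Finset ℕ) :
    bcut A B a b c (insert i I) J ≤ bcut A B a b c I J + a i := by
  have h1 : (∑ x ∈ A, if x ∈ insert i I then a x else 0) ≤
      (∑ x ∈ A, if x ∈ I then a x else 0) + a i := by
    have h : a i = ∑ x ∈ A, if x = i then a x else 0 := by simp [hi]
    rw [h, ← Finset.sum_add_distrib]
    refine Finset.sum_le_sum fun x _ => ?_
    by_cases hx : x = i <;> simp [hx]
  have h2 : (∑ x ∈ A, ∑ y ∈ B, if x ∉ insert i I ∧ y ∉ J then c x y else 0) ≤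
      ∑ x ∈ A, ∑ y ∈ B, if x ∉ I ∧ y ∉ J then c x y else 0 := by
    refine Finset.sum_le_sum fun x _ => Finset.sum_le_sum fun y _ => ?_
    by_cases hx : x = i <;> by_cases hxI : x ∈ I <;> simp [hx, hxI]
  unfold bcut
  omega

/-- Moving the column `j` into a cut costs at most its capacity `b j`. -/
theorem bcut_insert_col {B : Finset ℕ} {j : ℕ} (hj : j ∈ B) (A : Finset ℕ) (a b : ℕ → ℕ)
    (c : ℕ → ℕ → ℕ) (I J : Finset ℕ) :
    bcut A B a b c I (insert j J) ≤ bcut A B a b c I J + b j := by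
  have h1 : (∑ y ∈ B, if y ∈ insert j J then b y else 0) ≤
      (∑ y ∈ B, if y ∈ J then b y else 0) + b j := by
    have h : b j = ∑ y ∈ B, if y = j then b y else 0 := by simp [hj]
    rw [h, ← Finset.sum_add_distrib]
    refine Finset.sum_le_sum fun y _ => ?_
    by_cases hy : y = j <;> simp [hy]
  have h2 : (∑ x ∈ A, ∑ y ∈ B, if x ∉ I ∧ y ∉ insert j J then c x y else 0) ≤
      ∑ x ∈ A, ∑ y ∈ B, if x ∉ I ∧ y ∉ J then c x y else 0 := by
    refine Finset.sum_le_sum fun x _ => Finset.sum_le_sum fun y _ => ?_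
    by_cases hy : y = j <;> by_cases hyJ : y ∈ J <;> simp [hy, hyJ]
  unfold bcut
  omega

/-- Integral bipartite max-flow/min-cut: if every cut has capacity at least `F`, there is an integral
flow of value `F`. -/
theorem exists_of_le_bcut (A B : Finset ℕ) (a b : ℕ → ℕ) (c : ℕ → ℕ → ℕ) (F : ℕ)
    (hcut : ∀ I J, F ≤ bcut A B a b c I J) :
    ∃ f : ℕ → ℕ → ℕ, (∀ i j, f i j ≤ c i j) ∧ (∀ i ∈ A, ∑ j ∈ B, f i j ≤ a i) ∧
      (∀ j ∈ B, ∑ i ∈ A, f i j ≤ b j) ∧ ∑ i ∈ A, ∑ j ∈ B, f i j = F := by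
  induction hn : ∑ i ∈ A, ∑ j ∈ B, c i j generalizing a b c F with
  | zero =>
    have h0 := hcut ∅ ∅
    simp only [bcut, Finset.notMem_empty, not_false_eq_true, and_self, if_true, if_false,
      Finset.sum_const_zero, hn] at h0
    exact ⟨fun _ _ => 0, by simp, by simp, by simp, by simp; omega⟩
  | succ n ih =>
    obtain ⟨i, hi, hi'⟩ := Finset.exists_ne_zero_of_sum_ne_zero (by rw [hn]; simp)
    obtain ⟨j, hj, hcell⟩ := Finset.exists_ne_zero_of_sum_ne_zero hi'
    -- Split off one unit of capacity at the cell `(i, j)`.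
    obtain ⟨c', rfl⟩ : ∃ c' : ℕ → ℕ → ℕ, c = fun x y => c' x y + cellUnit i j x y := by
      refine ⟨fun x y => c x y - cellUnit i j x y, ?_⟩
      funext x y
      by_cases h : x = i ∧ y = j
      · obtain ⟨rfl, rfl⟩ := h
        simp [cellUnit]
        omega
      · simp [cellUnit, h]
    have hn' : ∑ i ∈ A, ∑ j ∈ B, c' i j = n := by
      simp only [Finset.sum_add_distrib, sum_cellUnit_row hj] at hn
      simp [hi] at hn
      exact hn
    simp only [bcut_add_cell hi hj] at hcut
    by_cases hc : ∀ I J, F ≤ bcut A B a b c' I J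
    · obtain ⟨f, h1, h2⟩ := ih a b c' F hc hn'
      exact ⟨f, fun x y => (h1 x y).trans (Nat.le_add_right _ _), h2⟩
    · -- The unit is needed by the tight cut `(I, J)`, so it is used.
      push Not at hc
      obtain ⟨I, J, hIJ⟩ := hc
      have hout : i ∉ I ∧ j ∉ J := by
        by_contra h
        have := hcut I J
        rw [if_neg h] at this
        omega
      have ha : 0 < a i := by
        have h1 := hcut (insert i I) J
        rw [if_neg (by simp)] at h1
        have h2 := bcut_insert_row hi B a b c' I J
        omega
      have hb : 0 < b j := by
        have h1 := hcut I (insert j J)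
        rw [if_neg (by simp)] at h1
        have h2 := bcut_insert_col hj A a b c' I J
        omega
      have hc2 : ∀ I' J', F - 1 ≤ bcut A B (fun x => a x - if x = i then 1 else 0)
          (fun y => b y - if y = j then 1 else 0) c' I' J' := by
        intro I' J'
        have h1 := bcut_pred hi hj a b ha hb c' I' J'
        have h2 := hcut I' J'
        by_cases hiI : i ∈ I' <;> by_cases hjJ : j ∈ J' <;> simp [hiI, hjJ] at h1 h2 <;> try omega
        -- A cut containing both `i` and `j` is uncrossed against `(I, J)`.
        have h3 := bcut_submodular A B a b c' I J I' J'
        have h4 := hcut (I ∪ I') (J ∩ J')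
        have h5 := hcut (I ∩ I') (J ∪ J')
        rw [if_neg (by simp [hiI])] at h4
        rw [if_neg (by simp [hjJ])] at h5
        omega
      obtain ⟨f, h1, h2, h3, h4⟩ := ih _ _ c' (F - 1) hc2 hn'
      refine ⟨fun x y => f x y + cellUnit i j x y, fun x y => Nat.add_le_add_right (h1 x y) _,
        ?_, ?_, ?_⟩
      · intro x hx
        have := h2 x hx
        rw [Finset.sum_add_distrib, sum_cellUnit_row hj]
        by_cases h : x = i
        · subst h
          simp at this ⊢
          omega
        · simpa [h] using this
      · intro y hy
        have := h3 y hy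
        rw [Finset.sum_add_distrib, sum_cellUnit_col hi]
        by_cases h : y = j
        · subst h
          simp at this ⊢
          omega
        · simpa [h] using this
      · simp only [Finset.sum_add_distrib, sum_cellUnit_row hj, h4]
        simp [hi]
        omega

/-- Two margins with equal sums are realised by some nonnegative integer matrix. -/
theorem exists_matrix_of_sum_eq (A B : Finset ℕ) (a b : ℕ → ℕ)
    (h : ∑ i ∈ A, a i = ∑ j ∈ B, b j) :
    ∃ g : ℕ → ℕ → ℕ, (∀ i ∈ A, ∑ j ∈ B, g i j = a i) ∧ (∀ j ∈ B, ∑ i ∈ A, g i j = b j) := by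
  obtain ⟨g, -, h2, h3, h4⟩ := exists_of_le_bcut A B a b (fun _ _ => ∑ i ∈ A, a i)
    (∑ i ∈ A, a i) (by
      intro I J
      unfold bcut
      by_cases hI : A ⊆ I
      · have : (∑ i ∈ A, if i ∈ I then a i else 0) = ∑ i ∈ A, a i :=
          Finset.sum_congr rfl fun i hi => if_pos (hI hi)
        omega
      by_cases hJ : B ⊆ J
      · have : (∑ j ∈ B, if j ∈ J then b j else 0) = ∑ j ∈ B, b j :=
          Finset.sum_congr rfl fun j hj => if_pos (hJ hj)
        omega
      obtain ⟨x, hx, hxI⟩ := Finset.not_subset.1 hI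
      obtain ⟨y, hy, hyJ⟩ := Finset.not_subset.1 hJ
      refine le_trans ?_ (Nat.le_add_left _ _)
      refine le_trans ?_ (Finset.single_le_sum (fun _ _ => Nat.zero_le _) hx)
      refine le_trans ?_ (Finset.single_le_sum (fun _ _ => Nat.zero_le _) hy)
      simp [hxI, hyJ])
  refine ⟨g, (Finset.sum_eq_sum_iff_of_le h2).1 h4, (Finset.sum_eq_sum_iff_of_le h3).1 ?_⟩
  rw [Finset.sum_comm, h4, h]

/-- The cut condition for 0/1 matrices with `∑ a - t` ones. -/
theorem le_bcut_one (A B : Finset ℕ) (a b : ℕ → ℕ) (x y t : ℕ)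
    (hax : ∀ i ∈ A, a i ≤ x) (hby : ∀ j ∈ B, b j ≤ y) (hab : ∑ i ∈ A, a i = ∑ j ∈ B, b j)
    (h : x * y ≤ ∑ i ∈ A, a i + t + 1) (I J : Finset ℕ) :
    ∑ i ∈ A, a i - t ≤ bcut A B a b (fun _ _ => 1) I J := by
  have e1 : (∑ i ∈ A, if i ∈ I then a i else 0) + ∑ i ∈ A with i ∉ I, a i = ∑ i ∈ A, a i := by
    rw [← Finset.sum_filter, Finset.sum_filter_add_sum_filter_not]
  have e2 : (∑ j ∈ B, if j ∈ J then b j else 0) + ∑ j ∈ B with j ∉ J, b j = ∑ j ∈ B, b j := by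
    rw [← Finset.sum_filter, Finset.sum_filter_add_sum_filter_not]
  have e3 : (∑ i ∈ A, ∑ j ∈ B, if i ∉ I ∧ j ∉ J then 1 else 0) =
      (A.filter (· ∉ I)).card * (B.filter (· ∉ J)).card := by
    rw [Finset.card_eq_sum_ones, Finset.card_eq_sum_ones, Finset.sum_mul_sum, Finset.sum_filter]
    refine Finset.sum_congr rfl fun i _ => ?_
    by_cases hi : i ∈ I <;> simp [hi, Finset.card_filter]
  have l1 : ∑ i ∈ A with i ∉ I, a i ≤ (A.filter (· ∉ I)).card * x := by
    simpa using Finset.sum_le_card_nsmul (A.filter (· ∉ I)) a x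
      fun i hi => hax i (Finset.mem_filter.1 hi).1
  have l2 : ∑ j ∈ B with j ∉ J, b j ≤ (B.filter (· ∉ J)).card * y := by
    simpa using Finset.sum_le_card_nsmul (B.filter (· ∉ J)) b y
      fun j hj => hby j (Finset.mem_filter.1 hj).1
  unfold bcut
  rw [e3]
  generalize (A.filter (· ∉ I)).card = k at *
  generalize (B.filter (· ∉ J)).card = l at *
  rcases le_or_gt x l with hl | hl
  · have := Nat.mul_le_mul_left k hl
    omega
  rcases le_or_gt y k with hk | hk
  · have := Nat.mul_le_mul_left l hk
    rw [mul_comm l k] at this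
    omega
  -- Here `k * x + l * y - k * l = x * y - (x - l) * (y - k)` with both factors positive.
  obtain ⟨u, rfl⟩ := Nat.exists_eq_add_of_lt hl
  obtain ⟨v, rfl⟩ := Nat.exists_eq_add_of_lt hk
  have key : k * (l + u + 1) + l * (k + v + 1) + 1 ≤ (l + u + 1) * (k + v + 1) + k * l := by
    nlinarith [Nat.zero_le (u * v)]
  omega


/-- Let `t > 0`, let `d 1, …, d n` be a degree sequence, and
let `(a, b)` be a balanced partition of `d` with `a, b` nonincreasing (so the
largest entries are `a 1` and `b 1`). If `a 1 * b 1 ≤ (∑ d)/2 + t + 1`, then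
`(a, b)` is `t`-tot-bigraphic. -/
theorem stmt18 (t n p q : ℕ) (ht : 0 < t) (hn : 0 < n) (hp : 0 < p) (hq : 0 < q)
    (d a b : ℕ → ℕ)
    (hpos : ∀ i ∈ Finset.Icc 1 n, 0 < d i)
    (hmono : AntitoneOn d (Set.Icc 1 n))
    (heven : Even (∑ i ∈ Finset.Icc 1 n, d i))
    (hmonoa : AntitoneOn a (Set.Icc 1 p))
    (hmonob : AntitoneOn b (Set.Icc 1 q))
    (hbp : IsBalancedPartition n d p a q b)
    (h : a 1 * b 1 ≤ (∑ i ∈ Finset.Icc 1 n, d i) / 2 + t + 1) :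
    ∃ m : ℕ → ℕ → ℕ, IsBipMG p q a b m ∧ bipTotMult p q m ≤ t := by
  obtain ⟨hms, hsum⟩ := hbp
  have hd : ∑ i ∈ Finset.Icc 1 n, d i = ∑ i ∈ Finset.Icc 1 p, a i + ∑ j ∈ Finset.Icc 1 q, b j := by
    have := congrArg Multiset.sum hms
    rw [Multiset.sum_add] at this
    exact this.symm
  have hax : ∀ i ∈ Finset.Icc 1 p, a i ≤ a 1 := fun i hi => by
    rw [Finset.mem_Icc] at hi
    exact hmonoa ⟨le_rfl, hp⟩ hi hi.1
  have hby : ∀ j ∈ Finset.Icc 1 q, b j ≤ b 1 := fun j hj => by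
    rw [Finset.mem_Icc] at hj
    exact hmonob ⟨le_rfl, hq⟩ hj hj.1
  obtain ⟨f, f1, fa, fb, fs⟩ := exists_of_le_bcut _ _ a b (fun _ _ => 1) _
    (le_bcut_one (Finset.Icc 1 p) (Finset.Icc 1 q) a b (a 1) (b 1) t hax hby hsum (by omega))
  have ra : ∑ i ∈ Finset.Icc 1 p, (a i - ∑ j ∈ Finset.Icc 1 q, f i j) +
      ∑ i ∈ Finset.Icc 1 p, ∑ j ∈ Finset.Icc 1 q, f i j = ∑ i ∈ Finset.Icc 1 p, a i := by
    rw [← Finset.sum_add_distrib]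
    exact Finset.sum_congr rfl fun i hi => Nat.sub_add_cancel (fa i hi)
  have rb : ∑ j ∈ Finset.Icc 1 q, (b j - ∑ i ∈ Finset.Icc 1 p, f i j) +
      ∑ i ∈ Finset.Icc 1 p, ∑ j ∈ Finset.Icc 1 q, f i j = ∑ j ∈ Finset.Icc 1 q, b j := by
    rw [Finset.sum_comm, ← Finset.sum_add_distrib]
    exact Finset.sum_congr rfl fun j hj => Nat.sub_add_cancel (fb j hj)
  obtain ⟨g, ga, gb⟩ := exists_matrix_of_sum_eq (Finset.Icc 1 p) (Finset.Icc 1 q)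
    (fun i => a i - ∑ j ∈ Finset.Icc 1 q, f i j) (fun j => b j - ∑ i ∈ Finset.Icc 1 p, f i j)
    (by omega)
  refine ⟨fun i j => g i j + f i j, ⟨fun i hi => ?_, fun j hj => ?_⟩, ?_⟩
  · rw [Finset.sum_add_distrib, ga i hi]
    exact Nat.sub_add_cancel (fa i hi)
  · rw [Finset.sum_add_distrib, gb j hj]
    exact Nat.sub_add_cancel (fb j hj)
  · calc bipTotMult p q (fun i j => g i j + f i j)
        ≤ ∑ i ∈ Finset.Icc 1 p, ∑ j ∈ Finset.Icc 1 q, g i j := by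
          refine Finset.sum_le_sum fun i _ => Finset.sum_le_sum fun j _ => ?_
          have := f1 i j
          simp only at this ⊢
          omega
      _ = ∑ i ∈ Finset.Icc 1 p, (a i - ∑ j ∈ Finset.Icc 1 q, f i j) := Finset.sum_congr rfl ga
      _ ≤ t := by omega
end

section
/- Let k ≥ 4 be an integer, let t = k−3, let a = b = (k^{k−1}, 1) (k−1 entries equal to k followed by one entry 1), and let d = a ∘ b. Then a_1 · b_1 = k² = (∑d)/2 + t + 2, and the partition (a,b) is not t-tot-bigraphic, i.e., every bipartite multigraph with left degrees a and right degrees b has total multiplicity strictly greater than t. -/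
/-- If each of the first `n` rows sums to `n + 1` and the first `n` entries of column `n + 1` sum to at
most `1`, then the `n × n` block has entry sum at least `n * (n + 1) - 1`, and only `n * n`
cells to spread it over, which leaves at least `n - 1` units of excess. -/
theorem block_total_mult (n : ℕ) (m : ℕ → ℕ → ℕ)
    (hr : ∀ i ∈ Finset.Icc 1 n, ∑ j ∈ Finset.Icc 1 (n + 1), m i j = n + 1)
    (hc : ∑ i ∈ Finset.Icc 1 n, m i (n + 1) ≤ 1) :
    n ≤ bipTotMult n n m + 1 := by
  have hrow : ∀ i ∈ Finset.Icc 1 n,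
      n + 1 ≤ ∑ j ∈ Finset.Icc 1 n, (m i j - 1) + n + m i (n + 1) := by
    intro i hi
    have h := hr i hi
    rw [Finset.sum_Icc_succ_top (by omega)] at h
    have hle : ∑ j ∈ Finset.Icc 1 n, m i j ≤ ∑ j ∈ Finset.Icc 1 n, ((m i j - 1) + 1) :=
      Finset.sum_le_sum fun j _ => by omega
    rw [Finset.sum_add_distrib] at hle
    simp only [Finset.sum_const, Nat.card_Icc, smul_eq_mul, mul_one] at hle
    omega
  have hsum := Finset.sum_le_sum hrow
  simp only [Finset.sum_add_distrib, Finset.sum_const, Nat.card_Icc, smul_eq_mul, mul_one,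
    Nat.add_sub_cancel] at hsum
  unfold bipTotMult
  omega

theorem block_le_bipTotMult (n : ℕ) (m : ℕ → ℕ → ℕ) :
    bipTotMult n n m ≤ bipTotMult (n + 1) (n + 1) m := by
  have hsub : Finset.Icc 1 n ⊆ Finset.Icc 1 (n + 1) := Finset.Icc_subset_Icc_right (Nat.le_succ n)
  unfold bipTotMult
  exact (Finset.sum_le_sum fun i _ => Finset.sum_le_sum_of_subset hsub).trans
    (Finset.sum_le_sum_of_subset hsub)

/-- Let `k ≥ 4`, let `t = k−3`, let `a = b = (k^{k−1}, 1)`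
(k−1 entries `k` followed by one entry `1`), and let `d = a ∘ b`. Then
`a 1 * b 1 = k² = (∑ d)/2 + t + 2`, and `(a, b)` is not `t`-tot-bigraphic:
every bipartite multigraph with left degrees `a` and right degrees `b` has
total multiplicity strictly greater than `t`. -/
theorem stmt19 (k : ℕ) (hk : 4 ≤ k) :
    let t := k - 3
    let a : ℕ → ℕ := fun i => if i ≤ k - 1 then k else 1
    let d : ℕ → ℕ := fun i => if i ≤ k then a i else a (i - k)
    a 1 * a 1 = k ^ 2 ∧
      k ^ 2 = (∑ i ∈ Finset.Icc 1 (2 * k), d i) / 2 + t + 2 ∧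
      ∀ m : ℕ → ℕ → ℕ, IsBipMG k k a a m → t < bipTotMult k k m := by
  obtain ⟨n, rfl⟩ : ∃ n, k = n + 1 := ⟨k - 1, by omega⟩
  intro t a d
  have hat : a (n + 1) = 1 := by simp [a]
  have ha : ∀ i ∈ Finset.Icc 1 n, a i = n + 1 := by
    intro i hi
    have := (Finset.mem_Icc.mp hi).2
    simp [a, this]
  have hsa : ∑ i ∈ Finset.Icc 1 (n + 1), a i = n * (n + 1) + 1 := by
    rw [Finset.sum_Icc_succ_top (by omega), hat, Finset.sum_congr rfl ha]
    simp
  refine ⟨?_, ?_, ?_⟩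
  · rw [ha 1 (Finset.mem_Icc.mpr ⟨le_rfl, by omega⟩)]
    ring
  · have hd : ∑ i ∈ Finset.Icc 1 (2 * (n + 1)), d i = 2 * (n * (n + 1) + 1) := by
      have hsplit : Finset.Icc 1 (2 * (n + 1)) =
          Finset.Icc 1 (n + 1) ∪ (Finset.Icc 1 (n + 1)).map (addRightEmbedding (n + 1)) := by
        rw [Finset.map_add_right_Icc]
        ext i
        simp only [Finset.mem_union, Finset.mem_Icc]
        omega
      have hdisj : Disjoint (Finset.Icc 1 (n + 1))
          ((Finset.Icc 1 (n + 1)).map (addRightEmbedding (n + 1))) := by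
        rw [Finset.map_add_right_Icc, Finset.disjoint_left]
        intro i
        simp only [Finset.mem_Icc]
        omega
      have hl : ∀ i ∈ Finset.Icc 1 (n + 1), d i = a i := by
        intro i hi
        have := (Finset.mem_Icc.mp hi).2
        simp [d, this]
      have hu : ∀ i ∈ Finset.Icc 1 (n + 1), d (addRightEmbedding (n + 1) i) = a i := by
        intro i hi
        have h1 : ¬ i + (n + 1) ≤ n + 1 := by
          have := (Finset.mem_Icc.mp hi).1
          omega
        simp only [d, addRightEmbedding_apply, if_neg h1, Nat.add_sub_cancel]
      rw [hsplit, Finset.sum_union hdisj, Finset.sum_map, Finset.sum_congr rfl hl,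
        Finset.sum_congr rfl hu, hsa, two_mul]
    rw [hd, Nat.mul_div_cancel_left _ (by norm_num)]
    obtain ⟨s, rfl⟩ : ∃ s, n = s + 3 := ⟨n - 3, by omega⟩
    have ht : t = s + 1 := by simp only [t]; omega
    rw [ht]
    ring
  · rintro m ⟨hr, hc⟩
    have hblock := block_total_mult n m (fun i hi => ?_) ?_
    · have := block_le_bipTotMult n m
      simp only [t]
      omega
    · have h := hr i (Finset.Icc_subset_Icc_right (Nat.le_succ n) hi)
      rwa [ha i hi] at h
    · have h := hc (n + 1) (Finset.mem_Icc.mpr ⟨by omega, le_rfl⟩)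
      rw [hat, Finset.sum_Icc_succ_top (by omega)] at h
      omega
end
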